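/- arXiv:2306.02989 — 2 statements merged into one kernel-verified Lean document; each statement's English description precedes it below -/
import Mathlib

section
/- (Etingof–Guralnick–Soloviev) Let X be a quandle whose number of elements is a prime p, and assume X is indecomposable. Then there exist α ∈ ℤ/pℤ \ {0,1} and a bijection ψ : ℤ/pℤ → X such that ψ((1−α)i + αj) = ψ(i) ▷ ψ(j) for all i, j ∈ ℤ/pℤ; that is, X is isomorphic to the affine quandle Aff(p,α). -/
open Polynomial
/-- conj norms -/
lemma egs_exists_embedding {F : Type*} [Field F] [CharZero F] [Algebra.IsAlgebraic ℚ F]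
    (x : F) (hx : IsIntegral ℤ x) (h0 : x ≠ 0) :
    ∃ i : F →+* ℂ, 1 ≤ ‖i x‖ := by
  by_contra! hcon
  have hroot : ∀ z ∈ ((minpoly ℚ x).map (algebraMap ℚ ℂ)).roots, ‖z‖ < 1 := by
    intro z hz
    have hz' : z ∈ (minpoly ℚ x).rootSet ℂ := by
      rw [Polynomial.mem_rootSet']
      rw [Polynomial.mem_roots'] at hz
      refine ⟨hz.1, ?_⟩
      have := hz.2
      rwa [Polynomial.IsRoot, Polynomial.eval_map_algebraMap] at this
    rw [← Algebra.IsAlgebraic.range_eval_eq_rootSet_minpoly] at hz'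
    obtain ⟨i, rfl⟩ := hz'
    exact hcon i.toRingHom
  have hmin : minpoly ℚ x = (minpoly ℤ x).map (algebraMap ℤ ℚ) :=
    minpoly.isIntegrallyClosed_eq_field_fractions' ℚ hx
  set P : ℂ[X] := (minpoly ℚ x).map (algebraMap ℚ ℂ) with hP
  have hmonic : P.Monic := (minpoly.monic (hx.tower_top)).map _
  have hsplit : P.Splits := IsAlgClosed.splits _
  have hdeg : P.roots ≠ 0 := by
    intro h
    have h1 := hsplit.natDegree_eq_card_roots
    rw [h, hP, Polynomial.natDegree_map] at h1
    exact absurd h1 (minpoly.natDegree_pos (hx.tower_top)).ne'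
  have hc : P.coeff 0 = ((minpoly ℤ x).coeff 0 : ℤ) := by
    rw [hP, hmin]; simp
  have hne : (minpoly ℤ x).coeff 0 ≠ 0 := by
    have := minpoly.coeff_zero_ne_zero (hx.tower_top (A := ℚ)) h0
    rw [hmin, Polynomial.coeff_map] at this
    intro h
    exact this (by rw [h, map_zero])
  have h1 : (1 : ℝ) ≤ ‖P.coeff 0‖ := by
    rw [hc, Complex.norm_intCast]
    exact_mod_cast Int.one_le_abs hne
  have h2 : ‖P.coeff 0‖ = (P.roots.map (fun z => ‖z‖)).prod := by
    rw [hsplit.coeff_zero_eq_prod_roots_of_monic hmonic]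
    rw [norm_mul, norm_pow, norm_neg, norm_one, one_pow, one_mul]
    exact map_multiset_prod (normHom : ℂ →*₀ ℝ) _
  have h3 : ∀ s : Multiset ℂ, s ≠ 0 → (∀ z ∈ s, ‖z‖ < 1) → (s.map (fun z => ‖z‖)).prod < 1 := by
    intro s
    induction s using Multiset.induction with
    | empty => simp
    | cons a s ih =>
      intro _ hs
      rw [Multiset.map_cons, Multiset.prod_cons]
      by_cases h : s = 0
      · subst h; simpa using hs a (by simp)
      · have := ih h (fun z hz => hs z (Multiset.mem_cons_of_mem hz))
        have ha := hs a (by simp)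
        have : 0 ≤ (s.map (fun z => ‖z‖)).prod := Multiset.prod_nonneg (by simp)
        nlinarith [norm_nonneg a]
  have := h3 _ hdeg hroot
  linarith

lemma egs_eigenbasis {F V : Type*} [Field F] [IsAlgClosed F] [CharZero F] [AddCommGroup V]
    [Module F V] [FiniteDimensional F V] (T : Module.End F V) (N : ℕ) (hN : 0 < N)
    (hT : T ^ N = 1) :
    ∃ (ι : Type) (_ : Fintype ι) (b : Module.Basis ι F V) (μ : ι → F),
      (∀ i, T (b i) = μ i • b i) ∧ ∀ i, μ i ^ N = 1 := by
  classical
  have hss : T.IsFinitelySemisimple := by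
    apply Module.End.IsSemisimple.isFinitelySemisimple
    refine Module.End.isSemisimple_of_squarefree_aeval_eq_zero (p := X ^ N - 1) ?_ ?_
    · exact (Polynomial.separable_X_pow_sub_C (1:F) (by exact_mod_cast hN.ne') one_ne_zero).squarefree
    · simp [hT]
  have htop : ⨆ μ, T.eigenspace μ = ⊤ := by
    rw [← Module.End.iSup_maxGenEigenspace_eq_top T]
    simp_rw [hss.maxGenEigenspace_eq_eigenspace]
  have hint : DirectSum.IsInternal (fun μ => T.eigenspace μ) :=
    (DirectSum.isInternal_submodule_iff_iSupIndep_and_iSup_eq_top _).2 ⟨T.eigenspaces_iSupIndep, htop⟩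
  let b := hint.collectedBasis (fun μ => Module.finBasis F (T.eigenspace μ))
  have : Fintype (Σ μ, Fin (Module.finrank F (T.eigenspace μ))) := FiniteDimensional.fintypeBasisIndex b
  let e := Fintype.equivFin (Σ μ, Fin (Module.finrank F (T.eigenspace μ)))
  have hb : ∀ i, T (b i) = i.1 • b i := fun i =>
    Module.End.mem_eigenspace_iff.1 (hint.collectedBasis_mem _ i)
  refine ⟨_, inferInstance, b.reindex e, fun i => (e.symm i).1, ?_, ?_⟩
  · intro i; simpa using hb _
  · intro i
    have h1 : ∀ k : ℕ, (T ^ k) (b (e.symm i)) = (e.symm i).1 ^ k • b (e.symm i) := by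
      intro k
      induction k with
      | zero => simp
      | succ k ih => rw [pow_succ', Module.End.mul_apply, ih, map_smul, hb, smul_smul, pow_succ]
    have h2 := h1 N
    rw [hT, Module.End.one_apply] at h2
    have h3 : ((e.symm i).1 ^ N - 1) • b (e.symm i) = 0 := by rw [sub_smul, ← h2, one_smul, sub_self]
    rcases smul_eq_zero.1 h3 with h | h
    · exact sub_eq_zero.1 h
    · exact absurd h (b.ne_zero _)

/-- traces of finite order operators -/
lemma egs_trace_finite_order {F : Type*} [Field F] [IsAlgClosed F] [CharZero F] {V : Type*} [AddCommGroup V]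
    [Module F V] [FiniteDimensional F V]
    (T S : Module.End F V) (N : ℕ) (hN : 0 < N)
    (hT : T ^ N = 1) (hTS : S * T = 1) (i : F →+* ℂ) :
    IsIntegral ℤ (LinearMap.trace _ _ T) ∧
    i (LinearMap.trace _ _ S) = starRingEnd ℂ (i (LinearMap.trace _ _ T)) ∧
    ((Module.finrank F V : ℝ) ≤ ‖i (LinearMap.trace _ _ T)‖ →
      ∃ r : F, r ≠ 0 ∧ ∀ v, T v = r • v) := by
  classical
  obtain ⟨ι, _, b, μ, hb, hμ⟩ := egs_eigenbasis T N hN hT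
  have hμ0 : ∀ j, μ j ≠ 0 := fun j h => by
    have := hμ j; rw [h, zero_pow hN.ne'] at this; exact zero_ne_one this
  have htr : LinearMap.trace _ _ T = ∑ j, μ j := by
    rw [LinearMap.trace_eq_matrix_trace _ b, Matrix.trace]
    refine Finset.sum_congr rfl fun j _ => ?_
    simp [LinearMap.toMatrix_apply, hb]
  have hS : ∀ j, S (b j) = (μ j)⁻¹ • b j := by
    intro j
    have : S (T (b j)) = b j := by rw [← Module.End.mul_apply, hTS, Module.End.one_apply]
    rw [hb, map_smul] at this
    rw [eq_inv_smul_iff₀ (hμ0 j), this]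
  have htrS : LinearMap.trace _ _ S = ∑ j, (μ j)⁻¹ := by
    rw [LinearMap.trace_eq_matrix_trace _ b, Matrix.trace]
    refine Finset.sum_congr rfl fun j _ => ?_
    simp [LinearMap.toMatrix_apply, hS]
  have hnorm : ∀ j, ‖i (μ j)‖ = 1 := by
    intro j
    refine Complex.norm_eq_one_of_pow_eq_one (n := N) ?_ hN.ne'
    rw [← map_pow, hμ, map_one]
  refine ⟨?_, ?_, ?_⟩
  · rw [htr]
    refine IsIntegral.sum _ fun j _ => ?_
    exact IsIntegral.of_pow hN (by rw [hμ]; exact isIntegral_one)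
  · rw [htr, htrS, map_sum, map_sum, map_sum]
    refine Finset.sum_congr rfl fun j _ => ?_
    rw [map_inv₀, Complex.inv_def, Complex.normSq_eq_norm_sq, hnorm]; simp
  · intro hle
    have hcardι : Module.finrank F V = Fintype.card ι :=
      Module.finrank_eq_card_basis b
    rw [hcardι, htr, map_sum] at hle
    set z := ∑ j, i (μ j) with hz
    -- all equal
    have hall : ∀ j k, μ j = μ k := by
      intro j k
      by_contra hne
      have hne' : i (μ j) ≠ i (μ k) := fun h => hne (i.injective h)
      have hjk : j ≠ k := fun h => hne (by rw [h])
      have h1 : ‖i (μ j) + i (μ k)‖ < 2 := by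
        have := norm_add_lt_of_not_sameRay (x := i (μ j)) (y := i (μ k))
          (fun h => hne' (h.eq_of_norm_eq (by rw [hnorm, hnorm])))
        rw [hnorm, hnorm] at this
        linarith
      have h2 : z = (i (μ j) + i (μ k)) + ∑ l ∈ (Finset.univ.erase j).erase k, i (μ l) := by
        rw [hz, ← Finset.add_sum_erase _ _ (Finset.mem_univ j),
          ← Finset.add_sum_erase (Finset.univ.erase j) _ (a := k) (by simp [hjk.symm]), add_assoc]
      have h3 : ‖∑ l ∈ (Finset.univ.erase j).erase k, i (μ l)‖ ≤ ((Finset.univ.erase j).erase k).card := by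
        refine (norm_sum_le _ _).trans ?_
        simp [hnorm]
      have h4 : ((Finset.univ.erase j).erase k).card + 2 = Fintype.card ι := by
        rw [Finset.card_erase_of_mem (by simp [hjk.symm]), Finset.card_erase_of_mem (by simp), Finset.card_univ]
        have : 1 < Fintype.card ι := Fintype.one_lt_card_iff.2 ⟨j, k, hjk⟩
        omega
      have h5 : (((Finset.univ.erase j).erase k).card : ℝ) + 2 = Fintype.card ι := by exact_mod_cast h4
      have := norm_add_le (i (μ j) + i (μ k)) (∑ l ∈ (Finset.univ.erase j).erase k, i (μ l))
      rw [← h2] at this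
      linarith
    rcases isEmpty_or_nonempty ι with h | ⟨⟨j⟩⟩
    · refine ⟨1, one_ne_zero, fun v => ?_⟩
      have : Subsingleton V := b.repr.toEquiv.subsingleton
      exact Subsingleton.elim _ _
    · refine ⟨μ j, hμ0 j, fun v => ?_⟩
      have : T = μ j • LinearMap.id := b.ext fun k => by
        rw [hb, hall k j]; simp
      rw [this]; simp

section EGS
variable {F : Type*} [Field F] {G : Type*} [Group G] [Fintype G]

/-- weighted class sum -/
noncomputable def egsA (F : Type*) [Field F] {G : Type*} [Group G] [Fintype G] (h : G) :
    MonoidAlgebra F G := ∑ t : G, MonoidAlgebra.of F G (t * h * t⁻¹)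

lemma egsA_of_comm (h u : G) : MonoidAlgebra.of F G u * egsA F h = egsA F h * MonoidAlgebra.of F G u := by
  rw [egsA, Finset.mul_sum, Finset.sum_mul]
  refine Fintype.sum_equiv (Equiv.mulLeft u) _ _ fun t => ?_
  simp only [← map_mul, Equiv.coe_mulLeft]
  congr 1; group

lemma egsA_comm (h : G) (v : MonoidAlgebra F G) : egsA F h * v = v * egsA F h := by
  induction v using MonoidAlgebra.induction_on with
  | of u => exact (egsA_of_comm h u).symm
  | add a b ha hb => rw [mul_add, add_mul, ha, hb]
  | smul r a ha => rw [mul_smul_comm, smul_mul_assoc, ha]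

/-- joint eigenspace -/
noncomputable def egsV (χ : G → F) : Submodule F (MonoidAlgebra F G) :=
  ⨅ h, LinearMap.ker (LinearMap.mulLeft F (egsA F h) - χ h • LinearMap.id)

lemma mem_egsV {χ : G → F} {v : MonoidAlgebra F G} :
    v ∈ egsV χ ↔ ∀ h, egsA F h * v = χ h • v := by
  simp [egsV, sub_eq_zero]

lemma egs_ss [CharZero F] (c v : MonoidAlgebra F G) (hc : ∀ w, c * w = w * c) (k : ℕ)
    (hv : c ^ k * v = 0) (hk : k ≠ 0) : c * v = 0 := by
  have key : ∀ v, c * (c * v) = 0 → c * v = 0 := by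
    intro v hv
    let K : Submodule (MonoidAlgebra F G) (MonoidAlgebra F G) :=
      { carrier := {w | c * w = 0}
        add_mem' := by intro a b ha hb; simp only [Set.mem_ofPred_eq] at *; rw [mul_add, ha, hb, add_zero]
        zero_mem' := by simp
        smul_mem' := by
          intro a b hb
          simp only [Set.mem_ofPred_eq, smul_eq_mul] at *
          rw [← mul_assoc, hc, mul_assoc, hb, mul_zero] }
    have : NeZero (Nat.card G : F) := ⟨by exact_mod_cast Nat.card_pos.ne'⟩
    obtain ⟨K', hK'⟩ := MonoidAlgebra.Submodule.exists_isCompl K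
    have hvtop : v ∈ K ⊔ K' := by rw [hK'.sup_eq_top]; trivial
    obtain ⟨a, ha, b, hb, rfl⟩ := Submodule.mem_sup.1 hvtop
    have ha' : c * a = 0 := ha
    rw [mul_add, ha', zero_add] at hv ⊢
    have h1 : c * b ∈ K' := by simpa using K'.smul_mem c hb
    have h2 : c * b ∈ K := hv
    have := Submodule.disjoint_def.1 hK'.disjoint _ h2 h1
    exact this
  obtain ⟨k, rfl⟩ := Nat.exists_eq_succ_of_ne_zero hk
  clear hk
  induction k with
  | zero => simpa using hv
  | succ k ih =>
    apply ih
    rw [pow_succ', mul_assoc] at hv ⊢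
    rw [pow_succ', mul_assoc] at hv
    exact key _ hv

lemma egsV_eq [CharZero F] (χ : G → F) :
    egsV χ = ⨅ h, Module.End.maxGenEigenspace (LinearMap.mulLeft F (egsA F h)) (χ h) := by
  refine iInf_congr fun h => ?_
  apply le_antisymm
  · intro v hv
    rw [Module.End.mem_maxGenEigenspace]
    refine ⟨1, ?_⟩
    rw [pow_one]; exact hv
  · intro v hv
    rw [Module.End.mem_maxGenEigenspace] at hv
    obtain ⟨k, hk⟩ := hv
    set c : MonoidAlgebra F G := egsA F h - algebraMap F _ (χ h) with hc
    have hcm : LinearMap.mulLeft F (egsA F h) - χ h • 1 = LinearMap.mulLeft F c := by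
      refine LinearMap.ext fun w => ?_
      simp [hc, sub_mul, Algebra.smul_def]
    have hcc : ∀ w, c * w = w * c := fun w => by
      rw [hc, sub_mul, mul_sub, egsA_comm, Algebra.commutes]
    rw [hcm, LinearMap.pow_mulLeft] at hk
    have : c * v = 0 := by
      refine egs_ss c v hcc (k + 1) ?_ (by omega)
      have hk' : c ^ k * v = 0 := hk
      rw [pow_succ', mul_assoc, hk', mul_zero]
    have h2 : LinearMap.mulLeft F (egsA F h) - χ h • LinearMap.id = LinearMap.mulLeft F c := hcm
    rw [LinearMap.mem_ker, h2]
    exact this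

variable [CharZero F] [IsAlgClosed F]

lemma egsV_internal : 
    iSupIndep (egsV : (G → F) → Submodule F (MonoidAlgebra F G)) ∧
      ⨆ χ : G → F, egsV χ = ⊤ := by
  have : FiniteDimensional F (MonoidAlgebra F G) := inferInstance
  have hcomm : ∀ h u : G, Commute (LinearMap.mulLeft F (egsA F h)) (LinearMap.mulLeft F (egsA F u)) := by
    intro h u
    refine LinearMap.ext fun w => ?_
    change egsA F h * (egsA F u * w) = egsA F u * (egsA F h * w)
    rw [← mul_assoc, egsA_comm h (egsA F u), mul_assoc]
  constructor
  · have := Module.End.independent_iInf_maxGenEigenspace_of_forall_mapsTo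
      (fun h : G => LinearMap.mulLeft F (egsA F h))
      (fun i j φ => Module.End.mapsTo_maxGenEigenspace_of_comm (hcomm j i) φ)
    simpa only [← egsV_eq] using this
  · have := Module.End.iSup_iInf_maxGenEigenspace_eq_top_of_iSup_maxGenEigenspace_eq_top_of_commute
      (fun h : G => LinearMap.mulLeft F (egsA F h)) (fun i j _ => hcomm i j)
      (fun i => Module.End.iSup_maxGenEigenspace_eq_top _)
    simpa only [← egsV_eq] using this

/-- two sided multiplication -/
noncomputable def egsM (F : Type*) [Field F] {G : Type*} [Group G] (h u : G) :
    Module.End F (MonoidAlgebra F G) :=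
  LinearMap.mulLeft F (MonoidAlgebra.of F G h) * LinearMap.mulRight F (MonoidAlgebra.of F G u)

lemma egsM_apply {F : Type*} [Field F] {G : Type*} [Group G] (h u : G) (v : MonoidAlgebra F G) :
    egsM F h u v = MonoidAlgebra.of F G h * (v * MonoidAlgebra.of F G u) := rfl

lemma egsM_mapsTo {F : Type*} [Field F] {G : Type*} [Group G] [Fintype G] (χ : G → F) (h u : G) :
    Set.MapsTo (egsM F h u) (egsV χ) (egsV χ) := by
  intro v hv
  rw [SetLike.mem_coe, mem_egsV] at *
  intro s
  rw [egsM_apply, ← mul_assoc, egsA_comm, mul_assoc, ← mul_assoc _ v, hv s,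
    smul_mul_assoc, mul_smul_comm]

/-- restricted two sided multiplication -/
noncomputable def egsR {F : Type*} [Field F] {G : Type*} [Group G] [Fintype G] (χ : G → F)
    (h u : G) : Module.End F (egsV χ) := (egsM F h u).restrict (egsM_mapsTo χ h u)

lemma egsR_coe {F : Type*} [Field F] {G : Type*} [Group G] [Fintype G] (χ : G → F)
    (h u : G) (v : egsV χ) : (egsR χ h u v : MonoidAlgebra F G) =
    MonoidAlgebra.of F G h * (v * MonoidAlgebra.of F G u) := rfl

lemma egsR_mul {F : Type*} [Field F] {G : Type*} [Group G] [Fintype G] (χ : G → F)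
    (h u h' u' : G) : egsR χ h u * egsR χ h' u' = egsR χ (h * h') (u' * u) := by
  ext1 v; apply Subtype.ext
  simp only [Module.End.mul_apply, egsR_coe, map_mul, mul_assoc]

lemma egsR_one {F : Type*} [Field F] {G : Type*} [Group G] [Fintype G] (χ : G → F) :
    egsR χ 1 1 = 1 := by
  ext1 v; apply Subtype.ext
  rw [egsR_coe, map_one, mul_one, one_mul]; rfl

lemma egsR_pow {F : Type*} [Field F] {G : Type*} [Group G] [Fintype G] (χ : G → F)
    (h u : G) (N : ℕ) : egsR χ h u ^ N = egsR χ (h ^ N) (u ^ N) := by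
  induction N with
  | zero => simp [egsR_one]
  | succ N ih => rw [pow_succ, ih, egsR_mul, ← pow_succ, ← pow_succ']

lemma egsR_trace {F : Type*} [Field F] [CharZero F] {G : Type*} [Group G] [Fintype G] (χ : G → F)
    (h u : G) : LinearMap.trace F _ (egsR χ h u) =
      Module.finrank F (egsV χ) * (χ h / Fintype.card G) * (χ u / Fintype.card G) := by
  have hG : (Fintype.card G : F) ≠ 0 := by exact_mod_cast Fintype.card_ne_zero
  have e1 : ∀ h u : G, (Fintype.card G : F) * LinearMap.trace F _ (egsR χ h u) =
      χ h * LinearMap.trace F _ (egsR χ 1 u) := by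
    intro h u
    have s1 : ∑ t : G, egsR χ (t * h * t⁻¹) u = χ h • egsR χ 1 u := by
      ext1 v; apply Subtype.ext
      have hv := mem_egsV.1 (egsR χ 1 u v).2 h
      rw [LinearMap.smul_apply, Submodule.coe_smul, ← hv, egsA, Finset.sum_mul, LinearMap.sum_apply,
        Submodule.coe_sum]
      refine Finset.sum_congr rfl fun t _ => ?_
      rw [egsR_coe, egsR_coe, map_one, one_mul]
    have s2 : ∀ t : G, LinearMap.trace F _ (egsR χ (t * h * t⁻¹) u) = LinearMap.trace F _ (egsR χ h u) := by
      intro t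
      have : egsR χ (t * h * t⁻¹) u = egsR χ (t * h) u * egsR χ t⁻¹ 1 := by
        rw [egsR_mul, one_mul]
      rw [this, LinearMap.trace_mul_comm, egsR_mul, mul_one, inv_mul_cancel_left]
    have s3 := congrArg (LinearMap.trace F _) s1
    rw [map_sum, Finset.sum_congr rfl (fun t _ => s2 t), map_smul] at s3
    simpa using s3
  have e2 : ∀ u : G, (Fintype.card G : F) * LinearMap.trace F _ (egsR χ 1 u) =
      χ u * Module.finrank F (egsV χ) := by
    intro u
    have s1 : ∑ t : G, egsR χ 1 (t * u * t⁻¹) = χ u • 1 := by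
      ext1 v; apply Subtype.ext
      have hv := mem_egsV.1 v.2 u
      rw [LinearMap.smul_apply, Submodule.coe_smul, Module.End.one_apply, ← hv, egsA_comm, egsA,
        Finset.mul_sum, LinearMap.sum_apply, Submodule.coe_sum]
      refine Finset.sum_congr rfl fun t _ => ?_
      rw [egsR_coe, map_one, one_mul]
    have s2 : ∀ t : G, LinearMap.trace F _ (egsR χ 1 (t * u * t⁻¹)) = LinearMap.trace F _ (egsR χ 1 u) := by
      intro t
      have : egsR χ 1 (t * u * t⁻¹) = egsR χ 1 (u * t⁻¹) * egsR χ 1 t := by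
        rw [egsR_mul, one_mul, mul_assoc]
      rw [this, LinearMap.trace_mul_comm, egsR_mul, one_mul, inv_mul_cancel_right]
    have s3 := congrArg (LinearMap.trace F _) s1
    rw [map_sum, Finset.sum_congr rfl (fun t _ => s2 t), map_smul, LinearMap.trace_one] at s3
    simpa using s3
  have a1 := e1 h u
  have a2 := e2 u
  field_simp
  linear_combination (Fintype.card G : F) * a1 + χ h * a2

lemma egs_coset_bij {G : Type*} [Group G] (C : Subgroup G) :
    Function.Bijective (fun x : (G ⧸ C) × C => x.1.out * (x.2 : G)) := by
  constructor
  · rintro ⟨q, c⟩ ⟨q', c'⟩ h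
    dsimp only at h
    have h1 : q = q' := by
      have := congrArg (QuotientGroup.mk (s := C)) h
      rwa [QuotientGroup.mk_mul_of_mem _ c.2, QuotientGroup.mk_mul_of_mem _ c'.2,
        QuotientGroup.out_eq', QuotientGroup.out_eq'] at this
    subst h1
    have := mul_left_cancel h
    rw [Subtype.ext this]
  · intro g
    refine ⟨⟨QuotientGroup.mk g, ⟨(QuotientGroup.mk (s := C) g).out⁻¹ * g, ?_⟩⟩, ?_⟩
    · rw [← QuotientGroup.eq, QuotientGroup.out_eq']
    · simp

/-- integrality -/
lemma egs_integral {F : Type*} [Field F] [CharZero F] {G : Type*} [Group G] [Fintype G] (χ : G → F)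
    (h : G) (C : Subgroup G) (hC : ∀ c ∈ C, c * h = h * c) (hχ : egsV χ ≠ ⊥) :
    IsIntegral ℤ ((C.index : F) * (χ h / Fintype.card G)) := by
  classical
  obtain ⟨v, hv, hv0⟩ := Submodule.exists_mem_ne_zero_of_ne_bot hχ
  let z : MonoidAlgebra ℤ G := ∑ q : G ⧸ C, MonoidAlgebra.of ℤ G (q.out * h * q.out⁻¹)
  let φ : MonoidAlgebra ℤ G →ₐ[ℤ] MonoidAlgebra F G := MonoidAlgebra.lift ℤ _ G (MonoidAlgebra.of F G)
  have hz : IsIntegral ℤ (φ z) := (IsIntegral.of_finite ℤ z).map φ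
  have hφz : φ z = ∑ q : G ⧸ C, MonoidAlgebra.of F G (q.out * h * q.out⁻¹) := by
    simp [z, φ]
  have hA : egsA F h = (Nat.card C : F) • φ z := by
    rw [hφz, egsA, ← (Equiv.ofBijective _ (egs_coset_bij C)).sum_comp,
      Fintype.sum_prod_type, Finset.smul_sum]
    refine Finset.sum_congr rfl fun q _ => ?_
    have : ∀ c : C, MonoidAlgebra.of F G ((Equiv.ofBijective _ (egs_coset_bij C)) (q, c) * h *
        ((Equiv.ofBijective _ (egs_coset_bij C)) (q, c))⁻¹) = MonoidAlgebra.of F G (q.out * h * q.out⁻¹) := by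
      intro c
      change MonoidAlgebra.of F G ((q.out * c) * h * (q.out * c)⁻¹) = _
      congr 1
      have := hC c c.2
      rw [mul_assoc (q.out : G) c h, this]; group
    rw [Finset.sum_congr rfl (fun c _ => this c)]
    simp [Nat.cast_smul_eq_nsmul]
  have hcard : (Fintype.card G : F) = Nat.card C * C.index := by
    rw [← Nat.card_eq_fintype_card, ← C.card_mul_index]; push_cast; rfl
  have hC0 : (Nat.card C : F) ≠ 0 := by exact_mod_cast Nat.card_pos.ne'
  have hI0 : (C.index : F) ≠ 0 := by exact_mod_cast C.index_ne_zero_of_finite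
  have heig : φ z * v = ((C.index : F) * (χ h / Fintype.card G)) • v := by
    have h1 := mem_egsV.1 hv h
    rw [hA, smul_mul_assoc] at h1
    have h2 : φ z * v = (Nat.card C : F)⁻¹ • χ h • v := by rw [← h1, inv_smul_smul₀ hC0]
    rw [h2, smul_smul, hcard]
    congr 1
    field_simp
  obtain ⟨P, hP, hP0⟩ := hz
  refine ⟨P, hP, ?_⟩
  set m := (C.index : F) * (χ h / Fintype.card G)
  have hpow : ∀ k : ℕ, (φ z) ^ k * v = m ^ k • v := by
    intro k
    induction k with
    | zero => simp
    | succ k ih => rw [pow_succ, mul_assoc, heig, mul_smul_comm, ih, smul_smul, pow_succ']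
  have h3 : (Polynomial.aeval (φ z) P) * v = (Polynomial.aeval m P) • v := by
    rw [Polynomial.aeval_eq_sum_range, Polynomial.aeval_eq_sum_range, Finset.sum_mul, Finset.sum_smul]
    refine Finset.sum_congr rfl fun k _ => ?_
    rw [smul_mul_assoc, hpow, smul_assoc]
  have h4 : Polynomial.aeval (φ z) P = 0 := hP0
  rw [h4, zero_mul] at h3
  exact (smul_eq_zero.1 h3.symm).resolve_right hv0

end EGS

section EGS2

lemma egs_coprime {F : Type*} [Field F] (a b : ℕ) (hab : Nat.Coprime a b) (x : F)
    (ha : IsIntegral ℤ ((a : F) * x)) (hb : IsIntegral ℤ ((b : F) * x)) : IsIntegral ℤ x := by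
  have h := Nat.gcd_eq_gcd_ab a b
  rw [hab] at h
  have h' : (1 : F) = a * (Nat.gcdA a b : ℤ) + b * (Nat.gcdB a b : ℤ) := by exact_mod_cast congrArg (Int.cast : ℤ → F) h
  have : x = (Nat.gcdA a b : F) * (a * x) + (Nat.gcdB a b : F) * (b * x) := by
    linear_combination x * h'
  rw [this]
  have hz : ∀ m : ℤ, IsIntegral ℤ (m : F) := fun m => by
    simpa using (isIntegral_algebraMap (R := ℤ) (A := F) (x := m))
  exact ((hz _).mul ha).add ((hz _).mul hb)

variable {F : Type*} [Field F] [CharZero F] [IsAlgClosed F] {G : Type*} [Group G] [Fintype G]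

lemma egs_fin (χ : G → F) (h u : G) : egsR χ h u ^ Fintype.card G = 1 := by
  rw [egsR_pow, pow_card_eq_one, pow_card_eq_one, egsR_one]

lemma egs_W_nonneg (χ : G → F) (hχ : egsV χ ≠ ⊥) (s : G) (i : F →+* ℂ) :
    ∃ r : ℝ, 0 ≤ r ∧ i (LinearMap.trace F _ (egsR χ s s⁻¹)) = (r : ℂ) ∧
      (χ s ≠ 0 → 0 < r) := by
  have hn : 0 < Module.finrank F (egsV χ) := by
    rw [Module.finrank_pos_iff]
    exact Submodule.nontrivial_iff_ne_bot.2 hχ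
  have hn' : (Module.finrank F (egsV χ) : F) ≠ 0 := by exact_mod_cast hn.ne'
  have hnC : (Module.finrank F (egsV χ) : ℂ) ≠ 0 := by exact_mod_cast hn.ne'
  have hG : (Fintype.card G : F) ≠ 0 := by exact_mod_cast Fintype.card_ne_zero
  have h1 := (egs_trace_finite_order (egsR χ s 1) (egsR χ s⁻¹ 1) (Fintype.card G) Fintype.card_pos
    (egs_fin χ s 1) (by rw [egsR_mul, inv_mul_cancel, one_mul, egsR_one]) i).2.1
  have h11 : χ 1 = Fintype.card G := by
    have := egsR_trace χ 1 1
    rw [egsR_one, LinearMap.trace_one] at this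
    obtain ⟨v, hv, hv0⟩ := Submodule.exists_mem_ne_zero_of_ne_bot hχ
    have h2 := mem_egsV.1 hv 1
    have h3 : egsA F (1 : G) = (Fintype.card G : F) • 1 := by
      simp [egsA, MonoidAlgebra.one_def, Nat.cast_smul_eq_nsmul]
    rw [h3, smul_mul_assoc, one_mul] at h2
    exact (smul_left_injective F hv0 h2).symm
  have t1 := egsR_trace χ s 1
  have t2 := egsR_trace χ s⁻¹ 1
  have t3 := egsR_trace χ s s⁻¹
  rw [h11, div_self hG, mul_one] at t1 t2
  set T := LinearMap.trace F _ (egsR χ s 1) with hT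
  set S := LinearMap.trace F _ (egsR χ s⁻¹ 1) with hS
  have t4 : LinearMap.trace F _ (egsR χ s s⁻¹) = T * S / Module.finrank F (egsV χ) := by
    rw [t3, t1, t2]; field_simp
  refine ⟨‖i T‖ ^ 2 / Module.finrank F (egsV χ), by positivity, ?_, ?_⟩
  · rw [t4, map_div₀, map_mul, h1, Complex.mul_conj, Complex.normSq_eq_norm_sq]
    simp
  · intro hs
    have : i T ≠ 0 := by
      rw [t1]
      exact (map_ne_zero i).2 (mul_ne_zero hn' (div_ne_zero hs hG))
    positivity

lemma egs_trace_total {F : Type*} [Field F] {G : Type*} [Group G] [Fintype G] [DecidableEq G] (s : G) :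
    LinearMap.trace F _ (egsM F s s⁻¹) = ((Finset.univ.filter fun h : G => s * h = h * s).card : F) := by
  classical
  let b : Module.Basis G F (MonoidAlgebra F G) := MonoidAlgebra.basis G F
  rw [LinearMap.trace_eq_matrix_trace _ b, Matrix.trace, Finset.card_filter, Nat.cast_sum]
  refine Finset.sum_congr rfl fun h _ => ?_
  rw [Matrix.diag_apply, LinearMap.toMatrix_apply]
  have hb : b h = MonoidAlgebra.of F G h := MonoidAlgebra.basis_apply _ _
  have hr : ∀ v, b.repr v h = v.coeff h := fun v => rfl
  rw [hb, hr, egsM_apply, ← map_mul, ← map_mul, MonoidAlgebra.of_apply, MonoidAlgebra.coeff_single_apply]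
  simp only [← mul_assoc, mul_inv_eq_iff_eq_mul, Nat.cast_ite, Nat.cast_one, Nat.cast_zero]

lemma egs_W_add_le (s : G) (p : ℕ) (hp : Nat.card (Subgroup.centralizer {s}) ≤ p) (χ χ' : G → F)
    (hne : χ ≠ χ')
    (hχ : egsV χ ≠ ⊥) (hχ' : egsV χ' ≠ ⊥) (i : F →+* ℂ) (r r' : ℝ)
    (hr : i (LinearMap.trace F _ (egsR χ s s⁻¹)) = (r : ℂ))
    (hr' : i (LinearMap.trace F _ (egsR χ' s s⁻¹)) = (r' : ℂ)) : r + r' ≤ p := by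
  classical
  have hint : DirectSum.IsInternal (egsV : (G → F) → Submodule F (MonoidAlgebra F G)) :=
    (DirectSum.isInternal_submodule_iff_iSupIndep_and_iSup_eq_top _).2 egsV_internal
  have hfin : {χ : G → F | egsV χ ≠ ⊥}.Finite :=
    WellFoundedGT.finite_ne_bot_of_iSupIndep hint.submodule_iSupIndep
  have h1 := LinearMap.trace_eq_sum_trace_restrict' hint hfin (f := egsM F s s⁻¹)
    (fun χ => egsM_mapsTo χ s s⁻¹)
  rw [egs_trace_total] at h1
  have h2 := congrArg i h1
  rw [map_sum, map_natCast] at h2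
  have h3 : ((Finset.univ.filter fun h : G => s * h = h * s).card : ℝ) =
      ∑ ψ ∈ hfin.toFinset, (i (LinearMap.trace F _ (egsR ψ s s⁻¹))).re := by
    have := congrArg Complex.re h2
    rw [Complex.re_sum, Complex.natCast_re] at this
    exact this
  have h4 : r + r' ≤ ∑ ψ ∈ hfin.toFinset, (i (LinearMap.trace F _ (egsR ψ s s⁻¹))).re := by
    have : r + r' = ∑ ψ ∈ ({χ, χ'} : Finset (G → F)), (i (LinearMap.trace F _ (egsR ψ s s⁻¹))).re := by
      rw [Finset.sum_pair hne, hr, hr']; simp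
    rw [this]
    refine Finset.sum_le_sum_of_subset_of_nonneg ?_ ?_
    · intro ψ hψ
      rw [Set.Finite.mem_toFinset]
      rcases Finset.mem_insert.1 hψ with rfl | h
      · exact hχ
      · rw [Finset.mem_singleton.1 h]; exact hχ'
    · intro ψ hψ _
      obtain ⟨q, hq, hq', _⟩ := egs_W_nonneg ψ (by simpa using hψ) s i
      rw [hq']; simpa using hq
  have h5 : (Finset.univ.filter fun h : G => s * h = h * s).card ≤ p := by
    refine le_trans (le_of_eq ?_) hp
    rw [← Fintype.card_subtype, ← Nat.card_eq_fintype_card]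
    refine Nat.card_congr (Equiv.subtypeEquivRight fun h => ?_)
    rw [Subgroup.mem_centralizer_singleton_iff]
    exact eq_comm
  have h6 : ((Finset.univ.filter fun h : G => s * h = h * s).card : ℝ) ≤ p := by exact_mod_cast h5
  linarith

lemma egs_trivial_mem : (∑ t : G, MonoidAlgebra.of F G t) ∈ egsV (fun _ : G => (Fintype.card G : F)) := by
  rw [mem_egsV]
  intro h
  have : ∀ u : G, MonoidAlgebra.of F G u * (∑ t : G, MonoidAlgebra.of F G t) = ∑ t : G, MonoidAlgebra.of F G t := by
    intro u
    rw [Finset.mul_sum]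
    refine Fintype.sum_equiv (Equiv.mulLeft u) _ _ fun t => ?_
    rw [← map_mul]; rfl
  rw [egsA, Finset.sum_mul, Finset.sum_congr rfl (fun t _ => this _)]
  simp only [Finset.sum_const, Finset.card_univ]
  rw [Nat.cast_smul_eq_nsmul]

lemma egs_trivial_ne : egsV (fun _ : G => (Fintype.card G : F)) ≠ ⊥ := by
  intro h
  have h1 := egs_trivial_mem (F := F) (G := G)
  rw [h, Submodule.mem_bot] at h1
  have h2 := congrArg (fun v : MonoidAlgebra F G => v.coeff 1) h1
  classical
  simp [MonoidAlgebra.coeff_sum, Finsupp.finset_sum_apply, MonoidAlgebra.coeff_single_apply] at h2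

lemma egs_main_scalar [Algebra.IsAlgebraic ℚ F] (p : ℕ) (hp : p.Prime) (g s : G) (Cg Cs : Subgroup G)
    (hCg : ∀ c ∈ Cg, c * g = g * c) (hCs : ∀ c ∈ Cs, c * s = s * c) (hig : Cg.index = p)
    (his : Nat.Coprime Cs.index p) (hcard : Nat.card (Subgroup.centralizer {s}) ≤ p)
    (χ : G → F) (hχ : egsV χ ≠ ⊥) (hg0 : χ g ≠ 0) (hs0 : χ s ≠ 0) :
    ∃ r : F, r ≠ 0 ∧ ∀ v ∈ egsV χ, MonoidAlgebra.of F G g * v = r • v := by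
  have hn : 0 < Module.finrank F (egsV χ) := by
    rw [Module.finrank_pos_iff]
    exact Submodule.nontrivial_iff_ne_bot.2 hχ
  set n := Module.finrank F (egsV χ) with hndef
  have hn' : (n : F) ≠ 0 := by exact_mod_cast hn.ne'
  have hG : (Fintype.card G : F) ≠ 0 := by exact_mod_cast Fintype.card_ne_zero
  have hpF : (p : F) ≠ 0 := by exact_mod_cast hp.ne_zero
  have h11 : χ 1 = Fintype.card G := by
    obtain ⟨v, hv, hv0⟩ := Submodule.exists_mem_ne_zero_of_ne_bot hχ
    have h2 := mem_egsV.1 hv 1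
    have h3 : egsA F (1 : G) = (Fintype.card G : F) • 1 := by
      simp [egsA, MonoidAlgebra.one_def, Nat.cast_smul_eq_nsmul]
    rw [h3, smul_mul_assoc, one_mul] at h2
    exact (smul_left_injective F hv0 h2).symm
  have tg := egsR_trace χ g 1
  rw [h11, div_self hG, mul_one] at tg
  have fin : ∀ i : F →+* ℂ, 1 ≤ ‖i (χ g / Fintype.card G)‖ →
      ∃ r : F, r ≠ 0 ∧ ∀ v ∈ egsV χ, MonoidAlgebra.of F G g * v = r • v := by
    intro i hi
    obtain ⟨r, hr0, hr⟩ := (egs_trace_finite_order (egsR χ g 1) (egsR χ g⁻¹ 1) (Fintype.card G)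
      Fintype.card_pos (egs_fin χ g 1) (by rw [egsR_mul, inv_mul_cancel, one_mul, egsR_one]) i).2.2 (by
        rw [tg, map_mul, norm_mul, map_natCast, Complex.norm_natCast]
        exact le_mul_of_one_le_right (by positivity) hi)
    refine ⟨r, hr0, fun v hv => ?_⟩
    have := congrArg Subtype.val (hr ⟨v, hv⟩)
    rw [egsR_coe, map_one, mul_one] at this
    exact this
  have hemb : ∃ i : F →+* ℂ, True :=
    (egs_exists_embedding (1 : F) isIntegral_one one_ne_zero).imp fun _ _ => trivial
  by_cases hpn : p ∣ n
  · by_cases htriv : χ = fun _ => (Fintype.card G : F)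
    · obtain ⟨i, -⟩ := hemb
      refine fin i ?_
      rw [htriv, div_self hG]; simp
    · exfalso
      obtain ⟨m, hm⟩ := hpn
      set W := LinearMap.trace F _ (egsR χ s s⁻¹) with hW
      have tW := egsR_trace χ s s⁻¹
      rw [← hW, ← hndef] at tW
      obtain ⟨i0, -⟩ := hemb
      have intW : IsIntegral ℤ W := (egs_trace_finite_order (egsR χ s s⁻¹) (egsR χ s⁻¹ s)
        (Fintype.card G) Fintype.card_pos (egs_fin χ s s⁻¹)
        (by rw [egsR_mul, inv_mul_cancel, egsR_one]) i0).1
      have int1 := egs_integral χ s Cs hCs hχ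
      have int2 := egs_integral χ s⁻¹ Cs (fun c hc => by
        have := hCs c hc
        exact (Commute.inv_right this : Commute c s⁻¹)) hχ
      have hnat : ∀ m : ℕ, IsIntegral ℤ (m : F) := fun m => by
        simpa using (isIntegral_algebraMap (R := ℤ) (A := F) (x := (m : ℤ)))
      have intx : IsIntegral ℤ (W / p) := by
        refine egs_coprime (Cs.index ^ 2) p (his.pow_left 2) _ ?_ ?_
        · have : ((Cs.index ^ 2 : ℕ) : F) * (W / p) = (m : F) *
            (((Cs.index : F) * (χ s / Fintype.card G)) * ((Cs.index : F) * (χ s⁻¹ / Fintype.card G))) := by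
            rw [tW, hm]; push_cast; field_simp
          rw [this]
          exact (hnat m).mul (int1.mul int2)
        · rw [mul_div_cancel₀ _ hpF]; exact intW
      have hW0 : W ≠ 0 := by
        obtain ⟨r, _, hr, hr'⟩ := egs_W_nonneg χ hχ s i0
        intro h
        rw [← hW, h, map_zero] at hr
        have : r = 0 := by exact_mod_cast hr.symm
        exact (hr' hs0).ne' this
      obtain ⟨i, hi⟩ := egs_exists_embedding (W / p) intx (div_ne_zero hW0 hpF)
      obtain ⟨r, hr0, hr, -⟩ := egs_W_nonneg χ hχ s i
      obtain ⟨r', hr0', hr', hpos⟩ := egs_W_nonneg _ (egs_trivial_ne (F := F) (G := G)) s i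
      have hpos' := hpos hG
      have hle := egs_W_add_le s p hcard χ _ htriv hχ egs_trivial_ne i r r' hr hr'
      rw [map_div₀, map_natCast, norm_div, hr, Complex.norm_natCast, Complex.norm_real,
        Real.norm_of_nonneg hr0, le_div_iff₀ (by exact_mod_cast hp.pos), one_mul] at hi
      linarith
  · have intg : IsIntegral ℤ (χ g / (Fintype.card G : F)) := by
      refine egs_coprime p n ((Nat.Prime.coprime_iff_not_dvd hp).2 hpn) _ ?_ ?_
      · have := egs_integral χ g Cg hCg hχ
        rwa [hig] at this
      · rw [← tg]
        obtain ⟨i0, -⟩ := hemb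
        exact (egs_trace_finite_order (egsR χ g 1) (egsR χ g⁻¹ 1) (Fintype.card G)
          Fintype.card_pos (egs_fin χ g 1) (by rw [egsR_mul, inv_mul_cancel, one_mul, egsR_one]) i0).1
    obtain ⟨i, hi⟩ := egs_exists_embedding _ intg (div_ne_zero hg0 hG)
    exact fin i hi

lemma egs_inv [Algebra.IsAlgebraic ℚ F] (p : ℕ) (hp : p.Prime) (g s : G) (Cg Cs : Subgroup G)
    (hCg : ∀ c ∈ Cg, c * g = g * c) (hCs : ∀ c ∈ Cs, c * s = s * c) (hig : Cg.index = p)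
    (his : Nat.Coprime Cs.index p) (hcard : Nat.card (Subgroup.centralizer {s}) ≤ p) (t : G) :
    MonoidAlgebra.of F G (t * g * t⁻¹) * (egsA F g * egsA F s) =
      MonoidAlgebra.of F G g * (egsA F g * egsA F s) := by
  let S : Submodule F (MonoidAlgebra F G) := LinearMap.ker
    (LinearMap.mulLeft F ((MonoidAlgebra.of F G (t * g * t⁻¹) - MonoidAlgebra.of F G g) *
      (egsA F g * egsA F s)))
  have hS : ∀ v, v ∈ S ↔ ((MonoidAlgebra.of F G (t * g * t⁻¹) - MonoidAlgebra.of F G g) *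
      (egsA F g * egsA F s)) * v = 0 := fun v => Iff.rfl
  have hle : ∀ χ : G → F, egsV χ ≤ S := by
    intro χ v hv
    rw [hS]
    have e1 : (egsA F g * egsA F s) * v = (χ g * χ s) • v := by
      rw [mul_assoc, mem_egsV.1 hv s, mul_smul_comm, mem_egsV.1 hv g, smul_smul, mul_comm]
    rw [mul_assoc, e1]
    by_cases h0 : χ g * χ s = 0
    · rw [h0, zero_smul, mul_zero]
    · have hg0 := left_ne_zero_of_mul h0
      have hs0 := right_ne_zero_of_mul h0
      by_cases hχ : egsV χ = ⊥
      · rw [hχ, Submodule.mem_bot] at hv; simp [hv]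
      obtain ⟨r, -, hr⟩ := egs_main_scalar p hp g s Cg Cs hCg hCs hig his hcard χ hχ hg0 hs0
      have hv' : MonoidAlgebra.of F G t⁻¹ * v ∈ egsV χ := by
        have := egsM_mapsTo χ t⁻¹ 1 hv
        rw [egsM_apply, map_one, mul_one] at this
        exact this
      have e2 : MonoidAlgebra.of F G (t * g * t⁻¹) * v = r • v := by
        rw [map_mul, map_mul, mul_assoc, mul_assoc, hr _ hv', mul_smul_comm, ← mul_assoc, ← map_mul,
          mul_inv_cancel, map_one, one_mul]
      rw [mul_smul_comm, sub_mul, e2, hr v hv, sub_self, smul_zero]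
  have h1 : (1 : MonoidAlgebra F G) ∈ S := by
    have : (⊤ : Submodule F (MonoidAlgebra F G)) ≤ S := by
      rw [← (egsV_internal (F := F) (G := G)).2]
      exact iSup_le hle
    exact this trivial
  rw [hS, mul_one, sub_mul, sub_eq_zero] at h1
  exact h1

lemma egs_coeff {F : Type*} [Field F] [CharZero F] {G : Type*} [Group G] [Fintype G] (g s w : G) :
    (egsA F g * egsA F s).coeff w ≠ 0 ↔ ∃ t u : G, t * g * t⁻¹ * (u * s * u⁻¹) = w := by
  classical
  have : (egsA F g * egsA F s).coeff w =
      ((Finset.univ.filter fun x : G × G => x.1 * g * x.1⁻¹ * (x.2 * s * x.2⁻¹) = w).card : F) := by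
    rw [egsA, egsA, Finset.sum_mul_sum, ← Fintype.sum_prod_type', Finset.card_filter, Nat.cast_sum,
      MonoidAlgebra.coeff_sum, Finsupp.finset_sum_apply]
    refine Finset.sum_congr rfl fun x _ => ?_
    rw [← map_mul, MonoidAlgebra.of_apply, MonoidAlgebra.coeff_single_apply]
    simp only [Nat.cast_ite, Nat.cast_one, Nat.cast_zero]
  rw [this, Nat.cast_ne_zero, Finset.card_ne_zero, Finset.filter_nonempty_iff]
  simp

end EGS2

lemma egs_alg : Algebra.IsAlgebraic ℚ (AlgebraicClosure ℚ) := by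
  have h : @Algebra.IsAlgebraic ℚ (AlgebraicClosure ℚ) _ _ (AlgebraicClosure.instAlgebra ℚ) :=
    AlgebraicClosure.isAlgebraic ℚ
  convert h
  exact Subsingleton.elim _ _

lemma egs_group {G : Type*} [Group G] [Fintype G] (p : ℕ) (hp : p.Prime) (g s : G) (Cg Cs : Subgroup G)
    (hCg : ∀ c ∈ Cg, c * g = g * c) (hCs : ∀ c ∈ Cs, c * s = s * c) (hig : Cg.index = p)
    (his : Nat.Coprime Cs.index p) (hcard : Nat.card (Subgroup.centralizer {s}) ≤ p)
    (hs : s ∈ Subgroup.normalClosure {d : G | ∃ t, d = g⁻¹ * (t * g * t⁻¹)}) :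
    ∃ t u : G, t * g * t⁻¹ * (u * s * u⁻¹) = g := by
  let F := AlgebraicClosure ℚ
  haveI : Algebra.IsAlgebraic ℚ F := egs_alg
  have hinv := egs_inv (F := F) p hp g s Cg Cs hCg hCs hig his hcard
  set y : MonoidAlgebra F G := egsA F g * egsA F s with hy
  have hyc : ∀ v, y * v = v * y := fun v => by
    rw [hy, mul_assoc, egsA_comm s v, ← mul_assoc, egsA_comm g v, mul_assoc]
  let St : Subgroup G :=
    { carrier := {h | MonoidAlgebra.of F G h * y = y}
      mul_mem' := by
        intro a b ha hb
        simp only [Set.mem_ofPred_eq] at *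
        rw [map_mul, mul_assoc, hb, ha]
      one_mem' := by simp only [Set.mem_ofPred_eq, map_one, one_mul]
      inv_mem' := by
        intro a ha
        simp only [Set.mem_ofPred_eq] at *
        conv_lhs => rw [← ha]
        rw [← mul_assoc, ← map_mul, inv_mul_cancel, map_one, one_mul] }
  have hSt : ∀ h, h ∈ St ↔ MonoidAlgebra.of F G h * y = y := fun h => Iff.rfl
  have hN : St.Normal := by
    constructor
    intro n hn u
    rw [hSt] at *
    rw [map_mul, map_mul, mul_assoc, ← hyc, ← mul_assoc, mul_assoc _ _ y, hn, ← hyc, mul_assoc,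
      ← map_mul, mul_inv_cancel, map_one, mul_one]
  have hle : Subgroup.normalClosure {d : G | ∃ t, d = g⁻¹ * (t * g * t⁻¹)} ≤ St := by
    refine Subgroup.normalClosure_le_normal ?_
    rintro d ⟨t, rfl⟩
    change _ ∈ St
    rw [hSt, map_mul, mul_assoc, hinv t, ← mul_assoc, ← map_mul, inv_mul_cancel, map_one, one_mul]
  have hsS := hle hs
  have h1 : y.coeff (g * s) ≠ 0 := (egs_coeff g s _).2 ⟨1, 1, by simp⟩
  have h2 : g * s * g⁻¹ ∈ St := hN.conj_mem _ hsS g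
  rw [hSt] at h2
  have h3 : y.coeff g ≠ 0 := by
    rw [← h2, MonoidAlgebra.of_apply, MonoidAlgebra.coeff_single_mul_apply] at h1
    simpa [mul_assoc] using h1
  exact (egs_coeff g s g).1 h3

section EGS3
open Equiv

lemma egs_act_conj {Q : Type*} [Quandle Q] (c : Perm Q)
    (hc : c ∈ Subgroup.closure {e : Perm Q | ∃ x : Q, e = Rack.act' x}) :
    ∀ x, c * Rack.act' x * c⁻¹ = Rack.act' (c x) := by
  induction hc using Subgroup.closure_induction with
  | mem e he =>
    obtain ⟨z, rfl⟩ := he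
    intro x
    exact (Rack.ad_conj z x).symm
  | one => intro x; simp
  | mul a b _ _ ha hb =>
    intro x
    rw [mul_inv_rev, Perm.mul_apply, ← ha, ← hb]; group
  | inv a _ ha =>
    intro x
    have := ha (a⁻¹ x)
    rw [show a (a⁻¹ x) = x from a.apply_symm_apply x] at this
    rw [← this]; group

lemma egs_cycle {Q : Type*} [Fintype Q] (p : ℕ) (hp : p.Prime) (hcard : Fintype.card Q = p)
    (σ : Perm Q) (hσ : orderOf σ = p) (x y : Q) : ∃ n : ℕ, (σ ^ n) x = y := by
  classical
  have hc : σ.IsCycle := Perm.isCycle_of_prime_order' (by rw [hσ]; exact hp)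
    (by rw [hσ, hcard]; have := hp.pos; omega)
  have hs : σ.support = Finset.univ := by
    rw [← Finset.card_eq_iff_eq_univ, ← hc.orderOf, hσ, hcard]
  have hm : ∀ z, σ z ≠ z := fun z => Perm.mem_support.1 (hs ▸ Finset.mem_univ z)
  exact hc.exists_pow_eq (hm x) (hm y)

lemma egs_final {Q : Type*} [Quandle Q] [Fintype Q] (p : ℕ) (hp : p.Prime)
    (hcard : Fintype.card Q = p)
    (hnt : ¬ ∀ x y : Q, Shelf.act x y = y) (σ : Perm Q)
    (hσG : σ ∈ Subgroup.closure {e : Perm Q | ∃ x : Q, e = Rack.act' x})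
    (hσ : orderOf σ = p) (a b : Q) (hab : Rack.act' a * σ = Rack.act' b) :
    ∃ α : ZMod p, α ≠ 0 ∧ α ≠ 1 ∧
      ∃ ψ : ZMod p → Q, Function.Bijective ψ ∧
        ∀ i j : ZMod p, ψ ((1 - α) * i + α * j) = Shelf.act (ψ i) (ψ j) := by
  haveI : Fact p.Prime := ⟨hp⟩
  haveI : NeZero p := ⟨hp.ne_zero⟩
  let L : Q → Perm Q := Rack.act'
  have hLa : ∀ x y, L x y = Shelf.act x y := fun x y => rfl
  have hLx : ∀ x, L x x = x := fun x => Quandle.fix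
  have hconj : ∀ (n : ℕ) x, σ ^ n * L x * (σ ^ n)⁻¹ = L ((σ ^ n) x) := fun n =>
    egs_act_conj (σ ^ n) (pow_mem hσG n)
  have hcyc := egs_cycle p hp hcard σ hσ
  let ψ : ZMod p → Q := fun i => (σ ^ i.val) a
  have hψn : ∀ n : ℕ, ψ (n : ZMod p) = (σ ^ n) a := fun n => by
    simp only [ψ, ZMod.val_natCast]
    rw [← hσ, pow_mod_orderOf]
  have hψs : Function.Surjective ψ := fun y => by
    obtain ⟨n, hn⟩ := hcyc a y
    exact ⟨n, by rw [hψn, hn]⟩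
  have hψ : Function.Bijective ψ := by
    rw [Fintype.bijective_iff_surjective_and_card]
    exact ⟨hψs, by rw [ZMod.card, hcard]⟩
  -- right multiplication
  have hr : ∀ x, ∃ y, L x * σ = L y := by
    intro x
    obtain ⟨n, rfl⟩ := hcyc a x
    refine ⟨(σ ^ n) b, ?_⟩
    rw [← hconj, ← hconj]
    have : L a * σ = L b := hab
    rw [← this]
    have hcm : σ * (σ ^ n)⁻¹ = (σ ^ n)⁻¹ * σ := ((Commute.refl σ).pow_right n).inv_right.eq
    rw [mul_assoc _ _ σ, ← hcm]; group
  have hrn : ∀ n : ℕ, ∃ y, L a * σ ^ n = L y := by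
    intro n
    induction n with
    | zero => exact ⟨a, by simp⟩
    | succ n ih =>
      obtain ⟨y, hy⟩ := ih
      obtain ⟨z, hz⟩ := hr y
      exact ⟨z, by rw [pow_succ, ← mul_assoc, hy, hz]⟩
  choose Y hY using hrn
  have hYb : Function.Bijective (fun i : ZMod p => Y i.val) := by
    rw [Fintype.bijective_iff_injective_and_card]
    refine ⟨fun i j hij => ?_, by rw [ZMod.card, hcard]⟩
    have h1 : L a * σ ^ i.val = L a * σ ^ j.val := by
      rw [hY, hY]; exact congrArg L hij
    have h2 := mul_left_cancel h1
    apply hψ.1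
    simp only [ψ, h2]
  obtain ⟨j, hj⟩ := hYb.2 (σ a)
  have hk : σ * L a = L a * σ ^ (j.val + 1) := by
    have h1 := hconj 1 a
    rw [pow_one] at h1
    have h2 := hY j.val
    simp only at hj
    rw [hj, ← h1] at h2
    rw [pow_succ, ← mul_assoc, h2]; group
  set k := j.val + 1 with hkd
  have hkn : ∀ n : ℕ, σ ^ n * L a = L a * σ ^ (k * n) := by
    intro n
    induction n with
    | zero => simp
    | succ n ih => rw [pow_succ, mul_assoc, hk, ← mul_assoc, ih, mul_assoc, ← pow_add]; ring_nf
  have hLk : ∀ i : ZMod p, L a (ψ ((k : ZMod p) * i)) = ψ i := by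
    intro i
    have h1 := congrArg (fun e : Perm Q => e a) (hkn i.val)
    simp only [Perm.mul_apply, hLx] at h1
    have h2 : ((k : ZMod p) * i) = ((k * i.val : ℕ) : ZMod p) := by
      rw [Nat.cast_mul, ZMod.natCast_zmod_val]
    rw [h2, hψn, ← h1]
  have hk0 : (k : ZMod p) ≠ 0 := by
    intro h
    have h0 := hLk 0
    have h1 := hLk 1
    rw [h, zero_mul] at h0 h1
    exact zero_ne_one (hψ.1 (h0.symm.trans h1))
  have hL : ∀ i : ZMod p, L a (ψ i) = ψ ((k : ZMod p)⁻¹ * i) := by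
    intro i
    rw [← hLk ((k : ZMod p)⁻¹ * i), mul_inv_cancel_left₀ hk0]
  have hadd : ∀ i j : ZMod p, (σ ^ i.val) (ψ j) = ψ (i + j) := by
    intro i j
    have : i + j = ((i.val + j.val : ℕ) : ZMod p) := by
      rw [Nat.cast_add, ZMod.natCast_zmod_val, ZMod.natCast_zmod_val]
    rw [this, hψn, pow_add]; rfl
  have hmain : ∀ i j : ZMod p, ψ ((1 - (k : ZMod p)⁻¹) * i + (k : ZMod p)⁻¹ * j) = Shelf.act (ψ i) (ψ j) := by
    intro i j
    rw [← hLa]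
    change _ = L ((σ ^ i.val) a) (ψ j)
    have e : ψ j = (σ ^ i.val) (ψ (j - i)) := by rw [hadd]; congr 1; ring
    rw [← hconj, e]
    simp only [Perm.mul_apply]
    rw [show (σ ^ i.val)⁻¹ ((σ ^ i.val) (ψ (j - i))) = ψ (j - i) from (σ ^ i.val).symm_apply_apply _]
    rw [hL, hadd]
    congr 1; ring
  refine ⟨(k : ZMod p)⁻¹, inv_ne_zero hk0, ?_, ψ, hψ, hmain⟩
  intro h1
  apply hnt
  intro x y
  obtain ⟨i, rfl⟩ := hψs x
  obtain ⟨j, rfl⟩ := hψs y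
  rw [← hmain, h1]; congr 1; ring

lemma egs_app {Q : Type*} [Quandle Q] [Fintype Q] (p : ℕ) (hp : p.Prime)
    (hcard : Fintype.card Q = p)
    (hnt : ¬ ∀ x y : Q, Shelf.act x y = y)
    (hindec : ∀ a b : Q,
      ∃ g ∈ Subgroup.closure {e : Perm Q | ∃ x : Q, e = Rack.act' x}, g a = b) :
    ∃ σ ∈ Subgroup.closure {e : Perm Q | ∃ x : Q, e = Rack.act' x}, orderOf σ = p ∧
      ∃ a b : Q, Rack.act' a * σ = Rack.act' b := by
  classical
  have hpf : Fact p.Prime := ⟨hp⟩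
  have hQ : Nat.card Q = p := by rw [Nat.card_eq_fintype_card, hcard]
  have hne : Nonempty Q := Fintype.card_pos_iff.1 (by rw [hcard]; exact hp.pos)
  obtain ⟨x0⟩ := hne
  set K := Subgroup.closure {e : Perm Q | ∃ x : Q, e = Rack.act' x} with hK
  have hmem : ∀ x, Rack.act' x ∈ K := fun x => Subgroup.subset_closure ⟨x, rfl⟩
  let L : Q → K := fun x => ⟨Rack.act' x, hmem x⟩
  have hsm : ∀ (c : K) (x : Q), c • x = (c : Perm Q) x := fun _ _ => rfl
  have hconj : ∀ (c : K) x, c * L x * c⁻¹ = L (c • x) := fun c x =>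
    Subtype.ext (egs_act_conj c.1 c.2 x)
  have : Fintype K := Fintype.ofFinite K
  have hpt : MulAction.IsPretransitive K Q := ⟨fun a b => by
    obtain ⟨g, hg, hgab⟩ := hindec a b
    exact ⟨⟨g, hg⟩, hgab⟩⟩
  have hpp : MulAction.IsPreprimitive K Q := MulAction.IsPreprimitive.of_prime_card (by rw [hQ]; exact hp)
  let N : Subgroup K := Subgroup.normalClosure {d : K | ∃ t, d = (L x0)⁻¹ * (t * L x0 * t⁻¹)}
  have hNt : MulAction.IsPretransitive N Q := by
    refine MulAction.IsQuasiPreprimitive.isPretransitive_of_normal (G := K) ?_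
    intro hfix
    apply hnt
    have h1 : ∀ z, L z = L x0 := by
      intro z
      obtain ⟨t, rfl⟩ := MulAction.exists_smul_eq K x0 z
      have hd : (L x0)⁻¹ * (t * L x0 * t⁻¹) ∈ N := Subgroup.subset_normalClosure ⟨t, rfl⟩
      have h2 : (L x0)⁻¹ * (t * L x0 * t⁻¹) = 1 := by
        apply Subtype.ext
        ext q
        have : q ∈ MulAction.fixedPoints N Q := hfix ▸ Set.mem_univ q
        exact this ⟨_, hd⟩
      rw [← hconj]
      exact (inv_mul_eq_one.1 h2).symm
    intro x y
    have h3 : L x = L y := (h1 x).trans (h1 y).symm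
    have h4 := congrArg (fun e : K => (e : Perm Q) y) h3
    exact h4.trans Quandle.fix
  have hidx : ∀ H : Subgroup K, MulAction.IsPretransitive H Q → p ∣ Nat.card H := by
    intro H hH
    rw [← hQ, ← MulAction.index_stabilizer_of_transitive H x0]
    exact Subgroup.index_dvd_card _
  obtain ⟨n, hn⟩ := exists_prime_orderOf_dvd_card' (G := N) p (hidx N hNt)
  let s : K := n.1
  have hsN : s ∈ N := n.2
  have hso : orderOf s = p := by rw [← hn]; exact Subgroup.orderOf_coe n
  have hsσ : orderOf (s : Perm Q) = p := by rw [← hso]; exact Subgroup.orderOf_coe s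
  have hcyc := egs_cycle p hp hcard (s : Perm Q) hsσ
  have hKd : Nat.card K ∣ p.factorial := by
    have := Subgroup.card_subgroup_dvd_card K
    rwa [Nat.card_perm, hQ] at this
  have hgrp := egs_group p hp (L x0) s (MulAction.stabilizer K x0) (Subgroup.zpowers s) ?_ ?_ ?_ ?_ ?_ hsN
  · obtain ⟨t, u, htu⟩ := hgrp
    refine ⟨((u * s * u⁻¹ : K) : Perm Q), (u * s * u⁻¹ : K).2, ?_, t • x0, x0, ?_⟩
    · rw [Subgroup.orderOf_coe, ← hso]
      exact (SemiconjBy.orderOf_eq (x := s) (y := u * s * u⁻¹) u (by simp [SemiconjBy])).symm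
    · rw [hconj] at htu
      exact congrArg Subtype.val htu
  · intro c hc
    have := hconj c x0
    rw [MulAction.mem_stabilizer_iff.1 hc] at this
    exact mul_inv_eq_iff_eq_mul.1 this
  · intro c hc
    obtain ⟨m, rfl⟩ := Subgroup.mem_zpowers_iff.1 hc
    exact ((Commute.refl s).zpow_left m).eq
  · rw [MulAction.index_stabilizer_of_transitive, hQ]
  · have h1 := (Subgroup.zpowers s).card_mul_index
    rw [Nat.card_zpowers, hso] at h1
    rw [← h1, ← Nat.mul_factorial_pred hp.ne_zero] at hKd
    have h2 := Nat.dvd_of_mul_dvd_mul_left hp.pos hKd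
    refine ((Nat.Prime.coprime_iff_not_dvd hp).2 fun h => ?_).symm
    have := (hp.dvd_factorial).1 (h.trans h2)
    have := hp.pos
    omega
  · rw [← hQ]
    refine Nat.card_le_card_of_injective (fun c : Subgroup.centralizer {s} => (c : K) • x0) ?_
    intro c d hcd
    apply Subtype.ext
    apply Subtype.ext
    ext q
    obtain ⟨m, rfl⟩ := hcyc x0 q
    have hcom : ∀ c : Subgroup.centralizer {s}, ((c : K) : Perm Q) (((s : Perm Q) ^ m) x0) =
        ((s : Perm Q) ^ m) (((c : K) : Perm Q) x0) := by
      intro c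
      have h1 : Commute (c : K) s := Subgroup.mem_centralizer_singleton_iff.1 c.2
      have h2 := (h1.pow_right m).eq
      exact congrArg (fun e : K => (e : Perm Q) x0) h2
    rw [hcom, hcom]
    exact congrArg _ hcd

end EGS3

/-- Etingof–Guralnick–Soloviev: Let `Q` be a quandle whose number of elements is a
prime `p`, and assume `Q` is indecomposable (the group of bijections of `Q` generated by the maps
`y ↦ x ◃ y` acts transitively on `Q`). Then there exist `α ∈ ℤ/pℤ \ {0,1}` and a bijection
`ψ : ℤ/pℤ → Q` such that `ψ((1−α)i + αj) = ψ(i) ◃ ψ(j)` for all `i, j`; that is, `Q` is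
isomorphic to the affine quandle `Aff(p, α)`. -/
theorem stmt7 (Q : Type*) [Quandle Q] [Fintype Q] (p : ℕ) (hp : p.Prime)
    (hcard : Fintype.card Q = p)
    (hindec : ∀ a b : Q,
      ∃ g ∈ Subgroup.closure {e : Equiv.Perm Q | ∃ x : Q, e = Rack.act' x}, g a = b) :
    ∃ α : ZMod p, α ≠ 0 ∧ α ≠ 1 ∧
      ∃ ψ : ZMod p → Q, Function.Bijective ψ ∧
        ∀ i j : ZMod p, ψ ((1 - α) * i + α * j) = Shelf.act (ψ i) (ψ j) := by
  have hnt : ¬ ∀ x y : Q, Shelf.act x y = y := by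
    intro h
    have h1 : ∀ g ∈ Subgroup.closure {e : Equiv.Perm Q | ∃ x : Q, e = Rack.act' x}, g = 1 := by
      intro g hg
      rw [← Subgroup.mem_bot]
      refine (Subgroup.closure_le _).2 ?_ hg
      rintro e ⟨x, rfl⟩
      exact Subgroup.mem_bot.2 (Equiv.ext (h x))
    have h2 : Fintype.card Q ≤ 1 := by
      refine Fintype.card_le_one_iff.2 fun a b => ?_
      obtain ⟨g, hg, hgab⟩ := hindec a b
      rw [← hgab, h1 g hg]; rfl
    have := hp.two_le
    omega
  obtain ⟨σ, hσG, hσ, a, b, hab⟩ := egs_app p hp hcard hnt hindec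
  exact egs_final p hp hcard hnt σ hσG hσ a b hab
end

section
/- Let k be a field, G a group, p a prime, and V a Yetter–Drinfeld module over kG with dim_k V = p. Let X = { x ∈ G : V_x ≠ 0 } be the support of V, and assume: X is a conjugacy class of G; X generates G; and for each x ∈ X, V_x is a nonzero irreducible module over the centralizer C_G(x) all of whose C_G(x)-equivariant endomorphisms are scalar multiples of the identity (i.e., V is absolutely irreducible). Then: (i) there exist α ∈ ℤ/pℤ \ {0,1} and a bijection φ : ℤ/pℤ → X with φ(i)φ(j)φ(i)⁻¹ = φ((1−α)i + αj) for all i, j ∈ ℤ/pℤ; (ii) dim_k V_x = 1 for all x ∈ X; and (iii) there exist a scalar λ ∈ k^× and a family of nonzero vectors v_x ∈ V_x (x ∈ X) such that x · v_y = λ v_{x y x⁻¹} for all x, y ∈ X. -/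
section AuxPA
set_option linter.all false
open Matrix

lemma aux_eig {K : Type*} [Field K] [IsAlgClosed K] [CharZero K] {d : ℕ}
    (M : Matrix (Fin d) (Fin d) K) (N : ℕ) (hN : 0 < N) (h : M ^ N = 1) :
    ∃ (P Q : Matrix (Fin d) (Fin d) K) (f : Fin d → K), P * Q = 1 ∧ Q * P = 1 ∧
      M = P * diagonal f * Q := by
  classical
  set F : Module.End K (Fin d → K) := Matrix.toLinAlgEquiv' M with hF
  have hFN : F ^ N = 1 := by rw [hF, ← map_pow, h, map_one]
  have hss : F.IsSemisimple := by
    refine Module.End.isSemisimple_of_squarefree_aeval_eq_zero (p := Polynomial.X ^ N - 1) ?_ ?_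
    · apply Polynomial.Separable.squarefree
      have := Polynomial.separable_X_pow_sub_C (F := K) (n := N) 1 (by exact_mod_cast hN.ne') one_ne_zero
      simpa using this
    · simp [hFN]
  have hint : DirectSum.IsInternal F.eigenspace := by
    rw [DirectSum.isInternal_submodule_iff_iSupIndep_and_iSup_eq_top]
    exact ⟨Module.End.eigenspaces_iSupIndep F, hss.iSup_eigenspace_eq_top⟩
  let b0 := hint.collectedBasis (fun μ => Module.finBasis K (F.eigenspace μ))
  let std := Pi.basisFun K (Fin d)
  let eq := b0.indexEquiv std
  let b := b0.reindex eq
  refine ⟨std.toMatrix b, b.toMatrix std, fun j => (eq.symm j).1, ?_, ?_, ?_⟩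
  · exact Module.Basis.toMatrix_mul_toMatrix_flip _ _
  · exact Module.Basis.toMatrix_mul_toMatrix_flip _ _
  · have h1 : LinearMap.toMatrix b b F = diagonal fun j => (eq.symm j).1 := by
      ext i j
      have hj : F (b j) = (eq.symm j).1 • b j := by
        have := hint.collectedBasis_mem (fun μ => Module.finBasis K (F.eigenspace μ)) (eq.symm j)
        rw [Module.End.mem_eigenspace_iff] at this
        simpa [b, b0] using this
      rw [LinearMap.toMatrix_apply, hj]
      simp [Matrix.diagonal_apply, Finsupp.single_apply]
      by_cases hij : i = j
      · subst hij; simp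
      · simp [hij, Ne.symm hij]
    rw [← h1, basis_toMatrix_mul_linearMap_toMatrix_mul_basis_toMatrix]
    simp [std, hF]
    exact (LinearMap.toMatrix'_toLin' M).symm

lemma aux_trace {K : Type*} [Field K] {n : ℕ} (d : Fin n → ℕ)
    (a : Π i, Matrix (Fin (d i)) (Fin (d i)) K) :
    LinearMap.trace K (Π i, Matrix (Fin (d i)) (Fin (d i)) K) (LinearMap.mulLeft K a) =
      ∑ i, (d i : K) * (a i).trace := by
  classical
  rw [LinearMap.trace_eq_matrix_trace K (Pi.basis fun i => Matrix.stdBasis K (Fin (d i)) (Fin (d i)))]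
  rw [Matrix.trace, Fintype.sum_sigma]
  refine Finset.sum_congr rfl fun i _ => ?_
  rw [Fintype.sum_prod_type]
  have : ∀ x y, Matrix.diag (LinearMap.toMatrix (Pi.basis fun i => Matrix.stdBasis K (Fin (d i)) (Fin (d i))) (Pi.basis fun i => Matrix.stdBasis K (Fin (d i)) (Fin (d i))) (LinearMap.mulLeft K a)) ⟨i, (x, y)⟩ = a i x x := by
    intro x y
    rw [Matrix.diag_apply, LinearMap.toMatrix_apply]
    simp [Pi.basis_apply, Matrix.stdBasis_eq_single, Pi.basis_repr]
    rw [Matrix.stdBasis]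
    simp
  simp_rw [this]
  simp [Matrix.trace, Finset.mul_sum]

lemma aux_pkg {K : Type*} [Field K] [IsAlgClosed K] [CharZero K] (H : Type*) [Group H] [Fintype H]
    [DecidableEq H] :
    ∃ (n : ℕ) (d : Fin n → ℕ) (R : ∀ i, H →* Matrix (Fin (d i)) (Fin (d i)) K),
      (∀ i, d i ≠ 0) ∧
      (∀ g, ∑ i, (d i : K) * (R i g).trace = if g = 1 then (Fintype.card H : K) else 0) ∧
      (∀ i, Submodule.span K (Set.range (R i)) = ⊤) := by
  classical
  haveI : NeZero (Nat.card H : K) := ⟨by simp⟩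
  obtain ⟨n, d, hd, ⟨e⟩⟩ := IsSemisimpleRing.exists_algEquiv_pi_matrix_of_isAlgClosed K (MonoidAlgebra K H)
  refine ⟨n, d, fun i => (((Pi.evalMonoidHom (fun i => Matrix (Fin (d i)) (Fin (d i)) K) i).comp (e : MonoidAlgebra K H →* _)).comp (MonoidAlgebra.of K H)), fun i => (hd i).out, ?_, ?_⟩
  · intro g
    have h1 := aux_trace d (e (MonoidAlgebra.of K H g))
    have h2 : LinearMap.mulLeft K (e (MonoidAlgebra.of K H g)) = e.toLinearEquiv.conj (LinearMap.mulLeft K (MonoidAlgebra.of K H g)) := by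
      refine LinearMap.ext fun x => ?_
      simp [LinearEquiv.conj_apply]
    rw [h2, LinearMap.trace_conj'] at h1
    refine Eq.trans h1.symm ?_
    let B : Module.Basis H K (MonoidAlgebra K H) := Module.Basis.ofRepr (MonoidAlgebra.coeffLinearEquiv K)
    have hB : ∀ x, B x = MonoidAlgebra.single x 1 := by
      intro x
      apply B.repr.injective
      simp [B]
    rw [LinearMap.trace_eq_matrix_trace K B, Matrix.trace]
    have : ∀ x, Matrix.diag (LinearMap.toMatrix B B (LinearMap.mulLeft K (MonoidAlgebra.of K H g))) x = if g = 1 then 1 else 0 := by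
      intro x
      rw [Matrix.diag_apply, LinearMap.toMatrix_apply, hB]
      simp [B, MonoidAlgebra.single_mul_single, Finsupp.single_apply]
    simp_rw [this]
    split_ifs <;> simp
  · intro i
    rw [eq_top_iff]
    intro M _
    obtain ⟨a, ha⟩ := e.surjective (Pi.single i M)
    have : M = e a i := by rw [ha]; simp
    rw [this]
    clear this ha
    induction a using MonoidAlgebra.induction_on with
    | of g => exact Submodule.subset_span ⟨g, rfl⟩
    | add x y hx hy => rw [map_add, Pi.add_apply]; exact Submodule.add_mem _ hx hy
    | smul r x hx => rw [map_smul, Pi.smul_apply]; exact Submodule.smul_mem _ _ hx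
end AuxPA

section AuxPB
set_option linter.all false
open Matrix

abbrev QBar := AlgebraicClosure ℚ

instance aux_algQ : Algebra.IsAlgebraic ℚ QBar := by
  have h := AlgebraicClosure.isAlgebraic ℚ
  have e : (AlgebraicClosure.instAlgebra ℚ : Algebra ℚ QBar) = DivisionRing.toRatAlgebra :=
    Subsingleton.elim _ _
  rw [e] at h
  exact h

lemma aux_kron (α : QBar) (hi : IsIntegral ℤ α) (h : ∀ σ : QBar →+* ℂ, ‖σ α‖ ≤ 1) :
    α = 0 ∨ ∀ σ : QBar →+* ℂ, ‖σ α‖ = 1 := by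
  by_cases h0 : α = 0
  · exact Or.inl h0
  right
  let L := IntermediateField.adjoin ℚ {α}
  have hiQ : IsIntegral ℚ α := hi.tower_top
  haveI : FiniteDimensional ℚ L := IntermediateField.adjoin.finiteDimensional hiQ
  haveI : NumberField L := ⟨⟩
  haveI : Algebra.IsAlgebraic L QBar := Algebra.IsAlgebraic.tower_top (K := ℚ) L
  let x : L := ⟨α, IntermediateField.mem_adjoin_simple_self ℚ α⟩
  have hxi : IsIntegral ℤ x := by
    have : IsIntegral ℤ (algebraMap L QBar x) := hi
    exact (isIntegral_algebraMap_iff (algebraMap L QBar).injective).1 this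
  obtain ⟨n, hn, hx⟩ := NumberField.Embeddings.pow_eq_one_of_norm_le_one L ℂ (x := x)
    (fun h => h0 (congrArg Subtype.val h)) hxi (by
      intro φ
      letI : Algebra L ℂ := φ.toAlgebra
      let ψ : QBar →ₐ[L] ℂ := IsAlgClosed.lift
      have := h ψ.toRingHom
      have h2 : ψ (algebraMap L QBar x) = algebraMap L ℂ x := ψ.commutes x
      have h3 : ψ.toRingHom α = φ x := h2
      rwa [h3] at this)
  intro σ
  have : (σ α) ^ n = 1 := by
    rw [← map_pow]
    have h2 : α ^ n = 1 := congrArg Subtype.val hx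
    rw [h2, map_one]
  exact Complex.norm_eq_one_of_pow_eq_one this hn.ne'

lemma aux_exσ : Nonempty (QBar →+* ℂ) :=
  ⟨(IsAlgClosed.lift : QBar →ₐ[ℚ] ℂ).toRingHom⟩

lemma aux_tr {d : ℕ} (M : Matrix (Fin d) (Fin d) QBar) (N : ℕ) (hN : 0 < N) (h : M ^ N = 1) :
    IsIntegral ℤ M.trace ∧ (∀ σ : QBar →+* ℂ, ‖σ M.trace‖ ≤ d) ∧
    (∀ M', M * M' = 1 → ∀ σ : QBar →+* ℂ, σ M'.trace = (starRingEnd ℂ) (σ M.trace)) ∧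
    (d ≠ 0 → ∀ σ : QBar →+* ℂ, ‖σ M.trace‖ = d → ∃ c : QBar, M = c • 1) := by
  obtain ⟨P, Q, f, hPQ, hQP, rfl⟩ := aux_eig M N hN h
  have hpow : ∀ k : ℕ, (P * diagonal f * Q) ^ k = P * diagonal (fun j => f j ^ k) * Q := by
    intro k
    induction k with
    | zero => simp [hPQ]
    | succ k ih =>
      rw [pow_succ, ih]
      calc _ = P * diagonal (fun j => f j ^ k) * (Q * P) * diagonal f * Q := by simp only [Matrix.mul_assoc]
        _ = _ := by rw [hQP, Matrix.mul_one, Matrix.mul_assoc P, Matrix.diagonal_mul_diagonal]; simp [pow_succ]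
  have hf : ∀ j, f j ^ N = 1 := by
    intro j
    rw [hpow] at h
    have h2 : diagonal (fun j => f j ^ N) = 1 := by
      calc _ = (Q * P) * diagonal (fun j => f j ^ N) * (Q * P) := by simp [hQP]
        _ = Q * (P * diagonal (fun j => f j ^ N) * Q) * P := by simp only [Matrix.mul_assoc]
        _ = 1 := by rw [h]; simp [hQP]
    have := congrFun (congrFun h2 j) j
    simpa using this
  have htr : ∀ g : Fin d → QBar, (P * diagonal g * Q).trace = ∑ j, g j := by
    intro g
    rw [Matrix.trace_mul_comm, ← Matrix.mul_assoc, hQP, Matrix.one_mul, Matrix.trace_diagonal]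
  have hnorm : ∀ (σ : QBar →+* ℂ) j, ‖σ (f j)‖ = 1 := fun σ j =>
    Complex.norm_eq_one_of_pow_eq_one (by rw [← map_pow, hf, map_one] : σ (f j) ^ N = 1) hN.ne'
  refine ⟨?_, ?_, ?_, ?_⟩
  · rw [htr]
    refine IsIntegral.sum _ fun j _ => ?_
    refine IsIntegral.of_pow hN ?_
    rw [hf]; exact isIntegral_one
  · intro σ
    rw [htr, map_sum]
    refine (norm_sum_le _ _).trans ?_
    simp [hnorm]
  · intro M' hM' σ
    have hM'2 : M' = P * diagonal (fun j => (f j)⁻¹) * Q := by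
      have h3 : (P * diagonal f * Q) * (P * diagonal (fun j => (f j)⁻¹) * Q) = 1 := by
        calc _ = P * diagonal f * (Q * P) * diagonal (fun j => (f j)⁻¹) * Q := by simp only [Matrix.mul_assoc]
          _ = _ := by
            rw [hQP, Matrix.mul_one, Matrix.mul_assoc P, Matrix.diagonal_mul_diagonal]
            have : (fun i => f i * (f i)⁻¹) = fun _ => 1 := by
              funext i
              refine mul_inv_cancel₀ ?_
              intro h0
              have := hf i
              rw [h0, zero_pow hN.ne'] at this
              exact zero_ne_one this
            rw [this]; simp [hPQ]
      exact right_inv_eq_right_inv hM' h3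
    rw [hM'2, htr, htr, map_sum, map_sum, map_sum]
    refine Finset.sum_congr rfl fun j _ => ?_
    rw [map_inv₀, Complex.inv_eq_conj (hnorm σ j)]
  · intro hd σ hσ
    rw [htr, map_sum] at hσ
    have hd' : (d : ℝ) ≠ 0 := by exact_mod_cast hd
    set s : ℂ := ∑ j, σ (f j) with hs
    have key : ∑ j, ‖(d : ℂ) * σ (f j) - s‖ ^ 2 = 0 := by
      have h1 : ∀ j, ‖(d : ℂ) * σ (f j) - s‖ ^ 2 = (d:ℝ)^2 + (d:ℝ)^2 - 2 * (d:ℝ) * (σ (f j) * (starRingEnd ℂ) s).re := by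
        intro j
        have h2 := hnorm σ j
        rw [← Complex.normSq_eq_norm_sq, Complex.normSq_sub, Complex.normSq_eq_norm_sq, Complex.normSq_eq_norm_sq, hσ, norm_mul, h2]
        simp only [mul_one, Complex.norm_natCast, mul_assoc]
        rw [← Complex.ofReal_natCast, Complex.re_ofReal_mul]
      simp_rw [h1]
      rw [Finset.sum_sub_distrib, ← Finset.mul_sum, ← Complex.re_sum, ← Finset.sum_mul, ← hs, Complex.mul_conj, Complex.normSq_eq_norm_sq, hσ]
      rw [Complex.ofReal_re]
      simp
      ring
    have key2 : ∀ j, (d : ℂ) * σ (f j) = s := by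
      intro j
      have := (Finset.sum_eq_zero_iff_of_nonneg (fun j _ => by positivity)).1 key j (Finset.mem_univ j)
      have h2 : ‖(d : ℂ) * σ (f j) - s‖ = 0 := by simpa using this
      exact sub_eq_zero.1 (norm_eq_zero.1 h2)
    let j0 : Fin d := ⟨0, Nat.pos_of_ne_zero hd⟩
    refine ⟨f j0, ?_⟩
    have : f = fun _ => f j0 := by
      funext j
      apply σ.injective
      have h3 := (key2 j).trans (key2 j0).symm
      exact mul_left_cancel₀ (by exact_mod_cast hd) h3
    rw [this]
    have h4 : (diagonal fun _ : Fin d => f j0) = f j0 • (1 : Matrix (Fin d) (Fin d) QBar) := by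
      rw [Matrix.smul_one_eq_diagonal]
    rw [h4]
    simp [hPQ]
end AuxPB

section AuxPC
set_option linter.all false
open Matrix

lemma aux_class {H : Type*} [Group H] [Fintype H] {d : ℕ}
    (R : H →* Matrix (Fin d) (Fin d) QBar) (hd : d ≠ 0)
    (hspan : Submodule.span QBar (Set.range R) = ⊤)
    (C : Finset H) (hC : ∀ g y, y ∈ C → g * y * g⁻¹ ∈ C) :
    ∃ ω : QBar, IsIntegral ℤ ω ∧ ∑ a ∈ C, R a = ω • 1 := by
  classical
  have hcomm : ∀ M : Matrix (Fin d) (Fin d) QBar, Commute M (∑ a ∈ C, R a) := by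
    intro M
    have hM : M ∈ Submodule.span QBar (Set.range R) := by rw [hspan]; trivial
    induction hM using Submodule.span_induction with
    | mem y hy =>
      obtain ⟨g, rfl⟩ := hy
      show R g * _ = _ * R g
      rw [Finset.mul_sum, Finset.sum_mul]
      refine Finset.sum_nbij' (fun a => g * a * g⁻¹) (fun a => g⁻¹ * a * g) ?_ ?_ ?_ ?_ ?_
      · intro a ha; exact hC g a ha
      · intro a ha; simpa using hC g⁻¹ a ha
      · intro a _; simp [mul_assoc]
      · intro a _; simp [mul_assoc]
      · intro a _; rw [← map_mul, ← map_mul]; simp [mul_assoc]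
    | zero => exact Commute.zero_left _
    | add x y _ _ hx hy => exact hx.add_left hy
    | smul r x _ hx => exact hx.smul_left r
  obtain ⟨ω, hω⟩ := Matrix.mem_range_scalar_iff_commute_single'.2 (fun i j => hcomm _)
  have hω' : ∑ a ∈ C, R a = ω • 1 := by
    rw [← hω, Matrix.scalar_apply, Matrix.smul_one_eq_diagonal]
  refine ⟨ω, ?_, hω'⟩
  haveI : Nonempty (Fin d) := ⟨⟨0, Nat.pos_of_ne_zero hd⟩⟩
  have h1 : IsIntegral ℤ (algebraMap QBar (Matrix (Fin d) (Fin d) QBar) ω) := by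
    rw [Algebra.algebraMap_eq_smul_one, ← hω']
    let L := MonoidAlgebra.lift ℤ (Matrix (Fin d) (Fin d) QBar) H R
    have h2 : L (∑ a ∈ C, MonoidAlgebra.of ℤ H a) = ∑ a ∈ C, R a := by
      rw [map_sum]
      refine Finset.sum_congr rfl fun a _ => ?_
      simp [L]
    rw [← h2]
    haveI : Module.Finite ℤ (MonoidAlgebra ℤ H) :=
      Module.Finite.equiv (MonoidAlgebra.coeffLinearEquiv ℤ : MonoidAlgebra ℤ H ≃ₗ[ℤ] (H →₀ ℤ)).symm
    exact (Algebra.IsIntegral.isIntegral (R := ℤ) (∑ a ∈ C, MonoidAlgebra.of ℤ H a)).map L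
  exact (isIntegral_algebraMap_iff (algebraMap QBar (Matrix (Fin d) (Fin d) QBar)).injective).1 h1

lemma aux_class_tr {H : Type*} [Group H] {d : ℕ}
    (R : H →* Matrix (Fin d) (Fin d) QBar) (x : H)
    (C : Finset H) (hC : ∀ y, y ∈ C → IsConj x y) (ω : QBar) (h : ∑ a ∈ C, R a = ω • 1) :
    (d : QBar) * ω = C.card * (R x).trace := by
  have h1 := congrArg Matrix.trace h
  rw [Matrix.trace_sum, Matrix.trace_smul, Matrix.trace_one] at h1
  have h2 : ∀ a ∈ C, (R a).trace = (R x).trace := by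
    intro a ha
    obtain ⟨c, hc⟩ := isConj_iff.1 (hC a ha)
    rw [← hc, map_mul, map_mul, Matrix.trace_mul_comm, ← Matrix.mul_assoc, ← map_mul]
    simp
  rw [Finset.sum_congr rfl h2] at h1
  simp at h1
  rw [h1, mul_comm]

lemma aux_scal {H : Type*} [Group H] {d : ℕ} (p : ℕ)
    (R : H →* Matrix (Fin d) (Fin d) QBar) (hd : d ≠ 0)
    (hspan : Submodule.span QBar (Set.range R) = ⊤)
    (x u : H) (X : Finset H) (hX : ∀ y, y ∈ X ↔ IsConj x y) (hXc : X.card = p)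
    (hgen : Subgroup.closure (X : Set H) = ⊤) (hx : Nat.Coprime p (orderOf x)) (hx0 : orderOf x ≠ 0) (hu : u ^ p = 1)
    (hc : ∃ c : QBar, R x = c • 1) :
    (d : QBar) * ((∑ a ∈ X, R a) * (∑ b ∈ X, R b⁻¹) * R u).trace = ((p ^ 2 : ℕ) : QBar) := by
  classical
  haveI : Nonempty (Fin d) := ⟨⟨0, Nat.pos_of_ne_zero hd⟩⟩
  obtain ⟨c, hc⟩ := hc
  set m := orderOf x
  have hinj : ∀ a b : QBar, a • (1 : Matrix (Fin d) (Fin d) QBar) = b • 1 → a = b := by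
    intro a b hab
    exact smul_left_injective QBar (one_ne_zero) hab
  have hcm : c ^ m = 1 := by
    apply hinj
    rw [one_smul, ← _root_.one_pow (M := Matrix (Fin d) (Fin d) QBar) m, ← smul_pow, ← hc, ← map_pow, pow_orderOf_eq_one, map_one, _root_.one_pow]
  have hall : ∀ a ∈ X, R a = c • 1 := by
    intro a ha
    obtain ⟨g, hg⟩ := isConj_iff.1 ((hX a).1 ha)
    rw [← hg, map_mul, map_mul, hc, Matrix.mul_smul, Matrix.mul_one, Matrix.smul_mul, ← map_mul]
    simp
  have hinv : ∀ (g : H) (e : QBar), e ≠ 0 → R g = e • 1 → R g⁻¹ = e⁻¹ • 1 := by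
    intro g e he hg
    have h1 : R g⁻¹ * R g = 1 := by rw [← map_mul]; simp
    rw [hg, Matrix.mul_smul, Matrix.mul_one] at h1
    rw [← h1, smul_smul, inv_mul_cancel₀ he, one_smul]
  have hm0 : m ≠ 0 := hx0
  have hc0 : c ≠ 0 := by rintro rfl; rw [zero_pow hm0] at hcm; exact zero_ne_one hcm
  have hG : ∀ g : H, ∃ e : QBar, e ^ m = 1 ∧ R g = e • 1 := by
    intro g
    have hg : g ∈ Subgroup.closure (X : Set H) := by rw [hgen]; trivial
    induction hg using Subgroup.closure_induction with
    | mem y hy => exact ⟨c, hcm, hall y hy⟩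
    | one => exact ⟨1, by simp, by simp⟩
    | mul y z _ _ hy hz =>
      obtain ⟨e, he, he'⟩ := hy
      obtain ⟨f, hf, hf'⟩ := hz
      exact ⟨e * f, by rw [mul_pow, he, hf, one_mul], by rw [map_mul, he', hf']; simp [smul_smul, mul_comm]⟩
    | inv y _ hy =>
      obtain ⟨e, he, he'⟩ := hy
      have he0 : e ≠ 0 := by rintro rfl; rw [zero_pow hm0] at he; exact zero_ne_one he
      exact ⟨e⁻¹, by rw [inv_pow, he, inv_one], hinv _ _ he0 he'⟩
  have hu1 : R u = 1 := by
    obtain ⟨e, he, he'⟩ := hG u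
    have h1 : e ^ p = 1 := by
      apply hinj
      rw [one_smul, ← _root_.one_pow (M := Matrix (Fin d) (Fin d) QBar) p, ← smul_pow, ← he', ← map_pow, hu, map_one, _root_.one_pow]
    have h2 : orderOf e ∣ 1 := by
      rw [← Nat.Coprime.gcd_eq_one hx]
      exact Nat.dvd_gcd (orderOf_dvd_of_pow_eq_one h1) (orderOf_dvd_of_pow_eq_one he)
    have h3 : e = 1 := orderOf_eq_one_iff.1 (Nat.dvd_one.1 h2)
    rw [he', h3, one_smul]
  have hd1 : d = 1 := by
    have h1 : (⊤ : Submodule QBar (Matrix (Fin d) (Fin d) QBar)) ≤ Submodule.span QBar {1} := by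
      rw [← hspan, Submodule.span_le]
      rintro _ ⟨g, rfl⟩
      obtain ⟨e, _, he'⟩ := hG g
      rw [he']
      exact Submodule.smul_mem _ _ (Submodule.mem_span_singleton_self 1)
    have h2 := Submodule.finrank_mono h1
    rw [finrank_top, Module.finrank_matrix, finrank_span_singleton one_ne_zero] at h2
    simp at h2
    have h3 : d ≤ d * d := Nat.le_mul_self d
    lia
  have e1 : ∑ a ∈ X, R a = (p * c) • (1 : Matrix (Fin d) (Fin d) QBar) := by
    rw [Finset.sum_congr rfl hall]
    rw [Finset.sum_const, hXc, ← Nat.cast_smul_eq_nsmul QBar, smul_smul]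
  have e2 : ∑ a ∈ X, R a⁻¹ = (p * c⁻¹) • (1 : Matrix (Fin d) (Fin d) QBar) := by
    rw [Finset.sum_congr rfl (fun a ha => hinv a c hc0 (hall a ha))]
    rw [Finset.sum_const, hXc, ← Nat.cast_smul_eq_nsmul QBar, smul_smul]
  rw [e1, e2, hu1]
  simp [smul_smul, hd1]
  field_simp

theorem aux_core {H : Type*} [Group H] [Fintype H] (p : ℕ) (hp : p.Prime) (x u : H)
    (X T : Finset H) (hX : ∀ y, y ∈ X ↔ IsConj x y) (hXc : X.card = p)
    (hgen : Subgroup.closure (X : Set H) = ⊤) (hx : Nat.Coprime p (orderOf x)) (hu : u ^ p = 1)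
    (hT : ∀ y, y ∈ T ↔ IsConj u y) (hTc : T.card * p = Fintype.card H) (hTp : Nat.Coprime p T.card) :
    ∃ a ∈ X, ∃ b ∈ X, a * b⁻¹ * u = 1 := by
  classical
  obtain ⟨n, d, R, hd, hreg, hspan⟩ := aux_pkg (K := QBar) H
  have hinvconj : ∀ (z : H) (C : Finset H), (∀ y, y ∈ C ↔ IsConj z y) → ∀ g y, y ∈ C → g * y * g⁻¹ ∈ C := by
    intro z C hC g y hy
    exact (hC _).2 (((hC y).1 hy).trans (isConj_iff.2 ⟨g, rfl⟩))
  have hcard : (Fintype.card H : QBar) ≠ 0 := by exact_mod_cast Fintype.card_ne_zero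
  have hT0 : (T.card : QBar) ≠ 0 := by
    intro h
    have : T.card = 0 := by exact_mod_cast h
    rw [this] at hTc; simp at hTc
    exact Fintype.card_ne_zero hTc.symm
  have hp0 : (p : QBar) ≠ 0 := by exact_mod_cast hp.ne_zero
  have hd0 : ∀ i, (d i : QBar) ≠ 0 := fun i => by exact_mod_cast hd i
  have hRN : ∀ i g, R i g ^ Fintype.card H = 1 := fun i g => by rw [← map_pow, pow_card_eq_one, map_one]
  have hHpos : 0 < Fintype.card H := Fintype.card_pos
  have htr := fun i g => aux_tr (R i g) _ hHpos (hRN i g)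
  -- column orthogonality
  have hcol : ∑ i, (R i u).trace * (R i u⁻¹).trace = p := by
    have h1 : ∑ g ∈ T, ∑ i, (d i : QBar) * (R i (g * u⁻¹)).trace = Fintype.card H := by
      simp_rw [hreg]
      rw [Finset.sum_eq_single u]
      · simp
      · intro b _ hb
        rw [if_neg]
        intro h; exact hb (mul_inv_eq_one.1 h)
      · intro h; exact absurd ((hT u).2 (IsConj.refl u)) h
    rw [Finset.sum_comm] at h1
    have h2 : ∀ i, ∑ g ∈ T, (d i : QBar) * (R i (g * u⁻¹)).trace = T.card * ((R i u).trace * (R i u⁻¹).trace) := by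
      intro i
      obtain ⟨ω, _, hω⟩ := aux_class (R i) (hd i) (hspan i) T (hinvconj u T hT)
      have h3 := aux_class_tr (R i) u T (fun y hy => (hT y).1 hy) ω hω
      rw [← Finset.mul_sum]
      simp_rw [map_mul]
      rw [← Matrix.trace_sum, ← Finset.sum_mul, hω, Matrix.smul_mul, Matrix.one_mul, Matrix.trace_smul, smul_eq_mul,
        ← mul_assoc, h3, mul_assoc]
    simp_rw [h2] at h1
    rw [← Finset.mul_sum] at h1
    apply mul_left_cancel₀ hT0
    rw [h1]; exact_mod_cast hTc.symm
  -- defect zero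
  have hdef : ∀ i, p ∣ d i → (R i u).trace = 0 := by
    intro i hpi
    obtain ⟨e, he⟩ := hpi
    obtain ⟨ω, hωi, hω⟩ := aux_class (R i) (hd i) (hspan i) T (hinvconj u T hT)
    have h3 := aux_class_tr (R i) u T (fun y hy => (hT y).1 hy) ω hω
    have hbz : (p : ℤ) * p.gcdA T.card + T.card * p.gcdB T.card = 1 := by
      rw [← Nat.gcd_eq_gcd_ab, hTp.gcd_eq_one]; rfl
    have hbz' : (p : QBar) * (p.gcdA T.card : ℤ) + T.card * (p.gcdB T.card : ℤ) = 1 := by exact_mod_cast hbz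
    generalize p.gcdA T.card = A at hbz'
    generalize p.gcdB T.card = B at hbz'
    set γ : QBar := A * (R i u).trace + B * (e * ω) with hγ
    have hγi : IsIntegral ℤ γ := by
      refine IsIntegral.add (IsIntegral.mul (isIntegral_intCast A) (htr i u).1) (IsIntegral.mul (isIntegral_intCast B) (IsIntegral.mul (isIntegral_natCast e) hωi))
    have hχ : (R i u).trace = p * γ := by
      have he' : (d i : QBar) = p * e := by exact_mod_cast he
      rw [he'] at h3
      rw [hγ]
      linear_combination (-(R i u).trace) * hbz' - B * h3
    have hlt : ∀ σ : QBar →+* ℂ, ‖σ γ‖ < 1 := by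
      intro σ
      have h4 : ∑ j, ‖σ (R j u).trace‖ ^ 2 = (p : ℝ) := by
        have h5 := congrArg σ hcol
        rw [map_sum] at h5
        have h6 : ∀ j, σ ((R j u).trace * (R j u⁻¹).trace) = ((‖σ (R j u).trace‖ ^ 2 : ℝ) : ℂ) := by
          intro j
          rw [map_mul, (htr j u).2.2.1 (R j u⁻¹) (by rw [← map_mul]; simp) σ, Complex.mul_conj, Complex.normSq_eq_norm_sq]
        simp_rw [h6] at h5
        rw [map_natCast] at h5
        exact_mod_cast h5
      have h7 : ‖σ (R i u).trace‖ ^ 2 ≤ (p : ℝ) := by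
        rw [← h4]
        exact Finset.single_le_sum (f := fun j => ‖σ (R j u).trace‖ ^ 2) (fun j _ => by positivity) (Finset.mem_univ i)
      rw [hχ, map_mul, map_natCast, norm_mul, Complex.norm_natCast] at h7
      have h8 : (1 : ℝ) < p := by exact_mod_cast hp.one_lt
      by_contra hcon
      push Not at hcon
      have h9 : (p : ℝ) ^ 2 ≤ (p * ‖σ γ‖) ^ 2 := by
        apply pow_le_pow_left₀ (by positivity)
        nlinarith
      nlinarith
    rcases aux_kron γ hγi (fun σ => (hlt σ).le) with h | h
    · rw [hχ, h, mul_zero]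
    · obtain ⟨σ⟩ := aux_exσ
      exact absurd (h σ) (hlt σ).ne
  -- Burnside
  have hburn : ∀ i, ¬ p ∣ d i → (∑ a ∈ X, R i a = 0) ∨ ∃ c : QBar, R i x = c • 1 := by
    intro i hpi
    have hcop : Nat.Coprime p (d i) := (Nat.Prime.coprime_iff_not_dvd hp).2 hpi
    obtain ⟨ω, hωi, hω⟩ := aux_class (R i) (hd i) (hspan i) X (hinvconj x X hX)
    have h3 := aux_class_tr (R i) x X (fun y hy => (hX y).1 hy) ω hω
    rw [hXc] at h3
    have hbz : (p : ℤ) * p.gcdA (d i) + (d i) * p.gcdB (d i) = 1 := by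
      rw [← Nat.gcd_eq_gcd_ab, hcop.gcd_eq_one]; rfl
    have hbz' : (p : QBar) * (p.gcdA (d i) : ℤ) + (d i) * (p.gcdB (d i) : ℤ) = 1 := by exact_mod_cast hbz
    generalize p.gcdA (d i) = A at hbz'
    generalize p.gcdB (d i) = B at hbz'
    set β : QBar := A * ω + B * (R i x).trace with hβ
    have hβi : IsIntegral ℤ β :=
      IsIntegral.add (IsIntegral.mul (isIntegral_intCast A) hωi) (IsIntegral.mul (isIntegral_intCast B) (htr i x).1)
    have hχ : (R i x).trace = d i * β := by
      rw [hβ]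
      linear_combination (-(R i x).trace) * hbz' - A * h3
    have hωβ : ω = p * β := by
      apply mul_left_cancel₀ (hd0 i)
      rw [h3, hχ]; ring
    have hdr : (0 : ℝ) < d i := by exact_mod_cast Nat.pos_of_ne_zero (hd i)
    have hnn : ∀ σ : QBar →+* ℂ, ‖σ (R i x).trace‖ = d i * ‖σ β‖ := by
      intro σ
      rw [hχ, map_mul, map_natCast, norm_mul, Complex.norm_natCast]
    rcases aux_kron β hβi (fun σ => by
      have := (htr i x).2.1 σ
      rw [hnn] at this
      by_contra hcon
      push Not at hcon
      nlinarith) with h | h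
    · left; rw [hω, hωβ, h]; simp
    · right
      obtain ⟨σ⟩ := aux_exσ
      refine (htr i x).2.2.2 (hd i) σ ?_
      rw [hnn, h σ, mul_one]
  have hscal := fun i => aux_scal p (R i) (hd i) (hspan i) x u X hX hXc hgen hx (orderOf_pos x).ne' hu
  -- trivial block
  have htriv : ∃ i, ∃ c : QBar, R i x = c • 1 := by
    have h1 : ∑ g, ∑ i, (d i : QBar) * (R i g).trace = Fintype.card H := by
      simp_rw [hreg]; simp
    rw [Finset.sum_comm] at h1
    have h2 : ∃ i, ∑ g, (d i : QBar) * (R i g).trace ≠ 0 := by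
      by_contra hcon
      push Not at hcon
      rw [Finset.sum_congr rfl (fun i _ => hcon i)] at h1
      simp at h1
      exact hcard h1.symm
    obtain ⟨i, hi⟩ := h2
    refine ⟨i, 1, ?_⟩
    obtain ⟨ω, _, hω⟩ := aux_class (R i) (hd i) (hspan i) Finset.univ (fun _ _ _ => Finset.mem_univ _)
    have hω0 : ω ≠ 0 := by
      rintro rfl
      apply hi
      rw [← Finset.mul_sum, ← Matrix.trace_sum, hω]; simp
    have h3 : R i x * ∑ g, R i g = ∑ g, R i g := by
      rw [Finset.mul_sum]
      simp_rw [← map_mul]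
      exact Fintype.sum_equiv (Equiv.mulLeft x) _ _ (fun _ => rfl)
    rw [hω, Matrix.mul_smul, Matrix.mul_one] at h3
    rw [one_smul]
    exact smul_right_injective _ hω0 h3
  by_contra hcon
  push Not at hcon
  have hsum : ∑ i, (d i : QBar) * ((∑ a ∈ X, R i a) * (∑ b ∈ X, R i b⁻¹) * R i u).trace = 0 := by
    have h1 : ∑ a ∈ X, ∑ b ∈ X, ∑ i, (d i : QBar) * (R i (a * b⁻¹ * u)).trace = 0 := by
      refine Finset.sum_eq_zero fun a ha => Finset.sum_eq_zero fun b hb => ?_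
      rw [hreg, if_neg (hcon a ha b hb)]
    rw [← h1]
    simp_rw [Finset.sum_comm (t := Finset.univ)]
    refine Finset.sum_congr rfl fun i _ => ?_
    simp_rw [← Finset.mul_sum, ← Matrix.trace_sum, map_mul, ← Finset.sum_mul, ← Finset.mul_sum, ← Finset.sum_mul]
  have hnat : ∀ i, ∃ m : ℕ, (d i : QBar) * ((∑ a ∈ X, R i a) * (∑ b ∈ X, R i b⁻¹) * R i u).trace = m := by
    intro i
    by_cases hpi : p ∣ d i
    · refine ⟨0, ?_⟩
      obtain ⟨ω, _, hω⟩ := aux_class (R i) (hd i) (hspan i) X (hinvconj x X hX)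
      obtain ⟨ω', _, hω'⟩ := aux_class (R i) (hd i) (hspan i) (X.image (·⁻¹)) (by
        intro g y hy
        rw [Finset.mem_image] at hy ⊢
        obtain ⟨z, hz, rfl⟩ := hy
        exact ⟨g * z * g⁻¹, hinvconj x X hX g z hz, by simp [mul_assoc]⟩)
      rw [Finset.sum_image (fun a _ b _ h => inv_injective h)] at hω'
      rw [hω, hω']
      simp [hdef i hpi]
    · rcases hburn i hpi with h | h
      · exact ⟨0, by rw [h]; simp⟩
      · exact ⟨_, hscal i h⟩
  choose m hm using hnat
  obtain ⟨i, hi⟩ := htriv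
  have h1 := hscal i hi
  rw [hm i] at h1
  simp_rw [hm] at hsum
  have h2 : ∑ i, m i = 0 := by exact_mod_cast hsum
  have h3 := (Finset.sum_eq_zero_iff.1 h2) i (Finset.mem_univ i)
  rw [h3] at h1
  have h4 : p ^ 2 = 0 := by exact_mod_cast h1.symm
  exact hp.ne_zero (by simpa using h4)
end AuxPC

section AuxPD
set_option linter.all false

lemma aux_zmod {H : Type*} [Group H] (p : ℕ) (τ : H) (h : τ ^ p = 1) :
    ∃ e : ZMod p → H, (∀ i j, e (i + j) = e i * e j) ∧ (∀ n : ℤ, e n = τ ^ n) := by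
  let f : ℤ →+ Additive H := zmultiplesHom (Additive H) (Additive.ofMul τ)
  have hf : f p = 0 := by
    simp only [f, zmultiplesHom_apply]
    rw [natCast_zsmul, ← ofMul_pow, h, ofMul_one]
  let F := ZMod.lift p ⟨f, hf⟩
  refine ⟨fun i => (F i).toMul, fun i j => by simp [map_add], fun n => ?_⟩
  simp [F, f]

lemma aux_classcard {H : Type*} [Group H] [Fintype H] (x : H) (X : Finset H)
    (hX : ∀ y, y ∈ X ↔ IsConj x y) :
    X.card * Nat.card (Subgroup.centralizer ({x} : Set H)) = Fintype.card H := by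
  classical
  rw [Subgroup.nat_card_centralizer_nat_card_stabilizer]
  have h1 := MulAction.card_orbit_mul_card_stabilizer_eq_card_group (ConjAct H) x
  have h2 : Fintype.card (MulAction.orbit (ConjAct H) x) = X.card := by
    rw [← Set.toFinset_card]
    congr 1
    ext y
    rw [Set.mem_toFinset, ConjAct.mem_orbit_conjAct, hX, isConj_comm]
  rw [h2, ConjAct.card] at h1
  rw [← h1, Nat.card_eq_fintype_card]

lemma aux_affH {H : Type*} [Group H] [Fintype H] (p : ℕ) (hp : p.Prime) (x : H)
    (X : Finset H) (hX : ∀ y, y ∈ X ↔ IsConj x y) (hXc : X.card = p)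
    (hgen : Subgroup.closure (X : Set H) = ⊤)
    (hcen : ∀ z : H, (∀ y ∈ X, z * y = y * z) → z = 1) :
    ∃ α : ZMod p, α ≠ 0 ∧ α ≠ 1 ∧ ∃ φ : ZMod p → H, Function.Injective φ ∧
      Set.range φ = X ∧ ∀ i j, φ i * φ j * (φ i)⁻¹ = φ ((1 - α) * i + α * j) := by
  classical
  haveI : Fact p.Prime := ⟨hp⟩
  have hinv : ∀ g y, y ∈ X → g * y * g⁻¹ ∈ X := fun g y hy =>
    (hX _).2 (((hX y).1 hy).trans (isConj_iff.2 ⟨g, rfl⟩))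
  have hxX : x ∈ X := (hX x).2 (IsConj.refl x)
  let act : H →* Equiv.Perm X :=
    { toFun := fun g =>
        { toFun := fun y => ⟨g * y * g⁻¹, hinv g y y.2⟩
          invFun := fun y => ⟨g⁻¹ * y * g, by simpa using hinv g⁻¹ y y.2⟩
          left_inv := fun y => by ext; simp [mul_assoc]
          right_inv := fun y => by ext; simp [mul_assoc] }
      map_one' := by ext; simp
      map_mul' := fun a b => by ext; simp [mul_assoc] }
  have hactinj : Function.Injective act := by
    rw [injective_iff_map_eq_one]
    intro g hg
    apply hcen
    intro y hy
    have h1 := congrArg (fun f : Equiv.Perm X => ((f ⟨y, hy⟩ : X) : H)) hg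
    have h2 : g * y * g⁻¹ = y := h1
    exact mul_inv_eq_iff_eq_mul.1 h2
  have hdvd : Fintype.card H ∣ p.factorial := by
    have := Subgroup.card_dvd_of_injective act hactinj
    rw [Nat.card_eq_fintype_card, Nat.card_eq_fintype_card, Fintype.card_perm, Fintype.card_coe, hXc] at this
    exact this
  have hpp : ¬ p * p ∣ Fintype.card H := by
    intro h
    have h1 := h.trans hdvd
    rw [← Nat.mul_factorial_pred hp.ne_zero] at h1
    have h2 := Nat.dvd_of_mul_dvd_mul_left hp.pos h1
    rw [hp.dvd_factorial] at h2
    have := hp.pos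
    lia
  have hcx := aux_classcard x X hX
  rw [hXc] at hcx
  have hCp : ¬ p ∣ Nat.card (Subgroup.centralizer ({x} : Set H)) := by
    intro h
    apply hpp
    rw [← hcx]
    exact Nat.mul_dvd_mul_left p h
  have hordc : ∀ g : H, g * x = x * g → Nat.Coprime p (orderOf g) := by
    intro g hg
    rw [Nat.Prime.coprime_iff_not_dvd hp]
    intro h
    apply hCp
    have hg' : g ∈ Subgroup.centralizer ({x} : Set H) := by
      rw [Subgroup.mem_centralizer_singleton_iff]; exact hg
    have h1 := orderOf_dvd_natCard (⟨g, hg'⟩ : Subgroup.centralizer ({x} : Set H))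
    rw [Subgroup.orderOf_mk] at h1
    exact h.trans h1
  obtain ⟨τ, hτ⟩ := exists_prime_orderOf_dvd_card p (show p ∣ Fintype.card H from ⟨_, hcx.symm⟩)
  have hτp : τ ^ p = 1 := by rw [← hτ]; exact pow_orderOf_eq_one τ
  have hτ1 : τ ≠ 1 := by
    rintro rfl
    rw [orderOf_one] at hτ
    exact hp.one_lt.ne hτ
  obtain ⟨e, headd, hez⟩ := aux_zmod p τ hτp
  have he0 : e 0 = 1 := by have := hez 0; simpa using this
  have he1 : e 1 = τ := by have := hez 1; simpa using this
  have hepow : ∀ i, e i ^ p = 1 := by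
    intro i
    obtain ⟨n, rfl⟩ := ZMod.intCast_surjective i
    rw [hez, ← zpow_natCast, ← zpow_mul, mul_comm, zpow_mul, zpow_natCast, hτp, one_zpow]
  have heneg : ∀ i, e (-i) = (e i)⁻¹ := by
    intro i
    rw [eq_inv_iff_mul_eq_one, ← headd]; simp [he0]
  have hecomm : ∀ i j, e i * e j = e j * e i := fun i j => by rw [← headd, ← headd, add_comm]
  have heinj : ∀ i, e i = 1 → i = 0 := by
    intro i hi
    obtain ⟨n, rfl⟩ := ZMod.intCast_surjective i
    rw [hez] at hi
    have := orderOf_dvd_iff_zpow_eq_one.2 hi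
    rw [hτ] at this
    exact (ZMod.intCast_zmod_eq_zero_iff_dvd n p).2 this
  have hefix : ∀ i, e i * x = x * e i → i = 0 := by
    intro i hi
    apply heinj
    have h1 := hordc _ hi
    have h2 : orderOf (e i) ∣ p := orderOf_dvd_of_pow_eq_one (hepow i)
    exact orderOf_eq_one_iff.1 (Nat.Coprime.eq_one_of_dvd h1.symm h2)
  let φ : ZMod p → H := fun i => e i * x * (e i)⁻¹
  have hφinj : Function.Injective φ := by
    intro i j hij
    have hij' : e i * x * (e i)⁻¹ = e j * x * (e j)⁻¹ := hij
    have h1 : e (i - j) * x = x * e (i - j) := by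
      rw [sub_eq_add_neg, headd, hecomm i, heneg]
      calc (e j)⁻¹ * e i * x = (e j)⁻¹ * (e i * x * (e i)⁻¹) * e i := by group
        _ = x * ((e j)⁻¹ * e i) := by rw [hij']; group
    exact sub_eq_zero.1 (hefix _ h1)
  have hφimg : Finset.univ.image φ = X := by
    apply Finset.eq_of_subset_of_card_le
    · intro y hy
      rw [Finset.mem_image] at hy
      obtain ⟨i, _, rfl⟩ := hy
      exact hinv _ _ hxX
    · rw [Finset.card_image_of_injective _ hφinj, Finset.card_univ, ZMod.card, hXc]
  have hφsurj : ∀ y ∈ X, ∃ i, φ i = y := by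
    intro y hy
    rw [← hφimg, Finset.mem_image] at hy
    obtain ⟨i, _, h⟩ := hy
    exact ⟨i, h⟩
  have hφrange : Set.range φ = X := by
    ext y
    constructor
    · rintro ⟨i, rfl⟩; exact hinv _ _ hxX
    · exact hφsurj y
  -- centralizer of τ
  have hcent : ∀ g, g * τ = τ * g → ∃ n : ℤ, g = τ ^ n := by
    intro g hg
    have hgc : Commute g τ := hg
    have hge : ∀ i, Commute g (e i) := by
      intro i
      obtain ⟨n, rfl⟩ := ZMod.intCast_surjective i
      rw [hez]; exact hgc.zpow_right n
    obtain ⟨i, hi⟩ := hφsurj _ (hinv g x hxX)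
    have hi' : e i * x * (e i)⁻¹ = g * x * g⁻¹ := hi
    obtain ⟨n, rfl⟩ := ZMod.intCast_surjective i
    refine ⟨n, ?_⟩
    rw [← hez]
    have hz : (e n)⁻¹ * g = 1 := by
      apply hcen
      have hzx : Commute ((e n)⁻¹ * g) x := by
        show (e n)⁻¹ * g * x = x * ((e n)⁻¹ * g)
        calc (e n)⁻¹ * g * x = (e n)⁻¹ * (g * x * g⁻¹) * g := by group
          _ = _ := by rw [← hi']; group
      have hze : ∀ j, Commute ((e n)⁻¹ * g) (e j) := fun j =>
        Commute.mul_left (Commute.inv_left (hecomm _ _)) (hge j)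
      intro y hy
      obtain ⟨j, rfl⟩ := hφsurj y hy
      exact ((hze j).mul_right hzx).mul_right (hze j).inv_right
    exact (inv_mul_eq_one.1 hz).symm
  have hCτ : Subgroup.centralizer ({τ⁻¹} : Set H) = Subgroup.zpowers τ := by
    ext g
    rw [Subgroup.mem_centralizer_singleton_iff, Subgroup.mem_zpowers_iff]
    constructor
    · intro h
      have h1 : Commute g τ⁻¹ := h
      obtain ⟨n, hn⟩ := hcent g (Commute.inv_right_iff.1 h1)
      exact ⟨n, hn.symm⟩
    · rintro ⟨n, rfl⟩
      exact ((Commute.refl τ).zpow_left n).inv_right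
  let T : Finset H := Finset.univ.filter fun y => IsConj τ⁻¹ y
  have hT : ∀ y, y ∈ T ↔ IsConj τ⁻¹ y := fun y => by simp [T]
  have hTc := aux_classcard τ⁻¹ T hT
  rw [hCτ, Nat.card_zpowers, hτ] at hTc
  have hTp : Nat.Coprime p T.card := by
    rw [Nat.Prime.coprime_iff_not_dvd hp]
    intro h
    apply hpp
    rw [← hTc]
    exact Nat.mul_dvd_mul_right h p
  obtain ⟨a, ha, b, hb, hab⟩ := aux_core p hp x τ⁻¹ X T hX hXc hgen (hordc x rfl) (by rw [inv_pow, hτp, inv_one]) hT hTc hTp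
  obtain ⟨i, rfl⟩ := hφsurj a ha
  obtain ⟨j, rfl⟩ := hφsurj b hb
  have hab' : e i * x * (e i)⁻¹ = τ * (e j * x * (e j)⁻¹) := by
    have h1 : e i * x * (e i)⁻¹ * (e j * x * (e j)⁻¹)⁻¹ * τ⁻¹ = 1 := hab
    rw [mul_inv_eq_one] at h1
    rw [← h1]; group
  set s := i - j with hs
  have hxs : x * e s * x⁻¹ = e (s - 1) := by
    have h1 : e s = (e j)⁻¹ * e i := by rw [hs, sub_eq_add_neg, headd, hecomm, heneg]
    have h2 : e (s - 1) = (e j)⁻¹ * τ⁻¹ * e i := by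
      rw [sub_eq_add_neg, headd, hecomm, heneg, he1, h1, ← mul_assoc]
      congr 1
      rw [← he1, ← heneg, ← heneg, hecomm]
    rw [h1, h2]
    have h3 : x * (e j)⁻¹ = (e j)⁻¹ * τ⁻¹ * (e i * x * (e i)⁻¹) := by rw [hab']; group
    calc x * ((e j)⁻¹ * e i) * x⁻¹ = (x * (e j)⁻¹) * e i * x⁻¹ := by group
      _ = _ := by rw [h3]; group
  have hs0 : s ≠ 0 := by
    intro h
    rw [h, he0, zero_sub] at hxs
    simp at hxs
    have := heinj _ hxs.symm
    exact one_ne_zero (neg_eq_zero.1 this)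
  -- general conjugation
  have hconj : ∀ n : ℕ, x * e (n * s) * x⁻¹ = e (n * (s - 1)) := by
    intro n
    induction n with
    | zero => simp [he0]
    | succ n ih =>
      have h1 : ((n + 1 : ℕ) : ZMod p) * s = n * s + s := by push_cast; ring
      have h2 : ((n + 1 : ℕ) : ZMod p) * (s - 1) = n * (s - 1) + (s - 1) := by push_cast; ring
      rw [h1, h2, headd, headd, ← ih, ← hxs]; group
  let α : ZMod p := (s - 1) * s⁻¹
  have hα : ∀ i, x * e i * x⁻¹ = e (α * i) := by
    intro i
    have h1 := hconj (i * s⁻¹).val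
    rw [ZMod.natCast_zmod_val] at h1
    have h2 : i * s⁻¹ * s = i := by field_simp
    have h3 : i * s⁻¹ * (s - 1) = α * i := by simp only [α]; ring
    rw [h2, h3] at h1
    exact h1
  refine ⟨α, ?_, ?_, φ, hφinj, hφrange, ?_⟩
  · intro h
    have h1 := hα 1
    rw [h, zero_mul, he0, he1] at h1
    apply hτ1
    have : x * τ = x := by rw [mul_inv_eq_one] at h1; exact h1
    simpa using this
  · intro h
    have h1 := hα 1
    rw [h, one_mul] at h1
    have := hefix 1 (mul_inv_eq_iff_eq_mul.1 h1).symm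
    exact one_ne_zero this
  · intro i j
    show (e i * x * (e i)⁻¹) * (e j * x * (e j)⁻¹) * (e i * x * (e i)⁻¹)⁻¹ = e _ * x * (e _)⁻¹
    have h1 : (1 - α) * i + α * j = i + α * (j - i) := by ring
    have h2 : e (j - i) = (e i)⁻¹ * e j := by rw [sub_eq_add_neg, headd, hecomm, heneg]
    rw [h1, headd, ← hα, h2]
    group
end AuxPD

section AuxPE
set_option linter.all false

lemma aux_cen {G : Type*} [Group G] (X : Set G) (hgen : Subgroup.closure X = ⊤) (z : G)
    (h : ∀ y ∈ X, z * y = y * z) : ∀ g : G, g * z = z * g := by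
  intro g
  have : Subgroup.closure X ≤ Subgroup.centralizer {z} := by
    rw [Subgroup.closure_le]
    intro y hy
    rw [SetLike.mem_coe, Subgroup.mem_centralizer_singleton_iff]
    exact (h y hy).symm
  rw [hgen] at this
  have h2 := this (Subgroup.mem_top g)
  rw [Subgroup.mem_centralizer_singleton_iff] at h2
  exact h2

lemma aux_D2' {G H : Type*} [Group G] [Group H] (π : G →* H) (hπs : Function.Surjective π)
    (hπ1 : ∀ g, π g = 1 ↔ g ∈ Subgroup.center G) (p : ℕ) (hp : p.Prime) (x : G)
    (X : Finset G) (hX : ∀ y, y ∈ X ↔ IsConj x y) (hXc : X.card = p)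
    (hgen : Subgroup.closure (X : Set G) = ⊤) :
    ∃ α : ZMod p, α ≠ 0 ∧ α ≠ 1 ∧ ∃ φ : ZMod p → G, Function.Injective φ ∧
      Set.range φ = X ∧ ∀ i j, φ i * φ j * (φ i)⁻¹ = φ ((1 - α) * i + α * j) := by
  classical
  have hcenX : ∀ z : G, (∀ y ∈ X, z * y = y * z) → z ∈ Subgroup.center G := by
    intro z hz
    rw [Subgroup.mem_center_iff]
    exact aux_cen (X : Set G) hgen z (fun y hy => hz y (Finset.mem_coe.1 hy))
  have hconj : ∀ g y, y ∈ X → g * y * g⁻¹ ∈ X := by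
    intro g y hy
    rw [hX] at hy ⊢
    exact hy.trans (isConj_iff.2 ⟨g, rfl⟩)
  have hxX : x ∈ X := (hX x).2 (IsConj.refl x)
  have hfin : Finite H := by
    choose s hs using id hπs
    refine Finite.of_injective (β := X → X)
      (fun q y => ⟨s q * y * (s q)⁻¹, hconj _ _ y.2⟩) ?_
    intro q r hqr
    rw [← hs q, ← hs r]
    have : (s q)⁻¹ * s r ∈ Subgroup.center G := by
      apply hcenX
      intro y hy
      have h1 := congrFun hqr ⟨y, hy⟩
      simp only [Subtype.mk.injEq] at h1
      have h2 : s r * y = (s r * y * (s r)⁻¹) * s r := by group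
      rw [mul_assoc, h2, ← h1]; group
    rw [← hπ1, map_mul, map_inv] at this
    exact inv_mul_eq_one.1 this
  haveI : Fintype H := Fintype.ofFinite H
  have hfib : ∀ b ∈ X.image π, (X.filter (fun a => π a = b)).card
      = (X.filter (fun a => π a = π x)).card := by
    intro b hb
    obtain ⟨y, hy, rfl⟩ := Finset.mem_image.1 hb
    obtain ⟨g, rfl⟩ := isConj_iff.1 ((hX y).1 hy)
    symm
    refine Finset.card_bij (fun a _ => g * a * g⁻¹) ?_ ?_ ?_
    · intro a ha
      rw [Finset.mem_filter] at ha ⊢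
      refine ⟨hconj _ _ ha.1, ?_⟩
      simp [ha.2]
    · intro a _ b _ h
      simpa using h
    · intro b hb
      rw [Finset.mem_filter] at hb
      refine ⟨g⁻¹ * b * g, ?_, by group⟩
      rw [Finset.mem_filter]
      refine ⟨by simpa using hconj g⁻¹ b hb.1, ?_⟩
      simp only [map_mul, map_inv, hb.2]; group
  have hcard : X.card = (X.image π).card * (X.filter (fun a => π a = π x)).card := by
    rw [Finset.card_eq_sum_card_image π X, Finset.sum_congr rfl hfib, Finset.sum_const,
      smul_eq_mul]
  have hinj : ∀ y ∈ X, ∀ y' ∈ X, π y = π y' → y = y' := by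
    rw [hXc] at hcard
    rcases (Nat.dvd_prime hp).1 (Dvd.intro _ hcard.symm) with h1 | h1
    · exfalso
      rw [Finset.card_eq_one] at h1
      obtain ⟨b, hb⟩ := h1
      have hb' : ∀ y ∈ X, π y = π x := by
        intro y hy
        have h1 := Finset.mem_image_of_mem π hy
        have h2 := Finset.mem_image_of_mem π hxX
        rw [hb, Finset.mem_singleton] at h1 h2
        rw [h1, h2]
      have hxc : x ∈ Subgroup.center G := by
        apply hcenX
        intro y hy
        have h1 : y⁻¹ * x ∈ Subgroup.center G := by
          rw [← hπ1, map_mul, map_inv, hb' y hy]; group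
        rw [Subgroup.mem_center_iff] at h1
        have h2 := h1 y
        have h3 : x = y⁻¹ * x * y := by rw [← h2]; group
        calc x * y = y * (y⁻¹ * x * y) := by group
          _ = y * x := by rw [← h3]
      have : X = {x} := by
        ext y
        rw [hX, Finset.mem_singleton]
        constructor
        · intro h
          obtain ⟨g, rfl⟩ := isConj_iff.1 h
          rw [Subgroup.mem_center_iff] at hxc
          rw [hxc g]; group
        · rintro rfl; exact IsConj.refl _
      rw [this, Finset.card_singleton] at hXc
      exact hp.one_lt.ne hXc
    · exact fun y hy y' hy' h => Finset.card_image_iff.1 (h1.trans hXc.symm) hy hy' h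
  obtain ⟨α, h0, h1, φ, hφi, hφr, hφ⟩ := aux_affH p hp (π x) (X.image π) (by
      intro q
      rw [Finset.mem_image]
      constructor
      · rintro ⟨y, hy, rfl⟩
        obtain ⟨g, rfl⟩ := isConj_iff.1 ((hX y).1 hy)
        exact isConj_iff.2 ⟨π g, by simp⟩
      · intro h
        obtain ⟨c, rfl⟩ := isConj_iff.1 h
        obtain ⟨g, rfl⟩ := hπs c
        exact ⟨g * x * g⁻¹, hconj _ _ hxX, by simp⟩)
    (by rw [Finset.card_image_iff.2 (fun y hy y' hy' h => hinj y hy y' hy' h), hXc])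
    (by
      rw [Finset.coe_image, ← MonoidHom.map_closure, hgen]
      exact Subgroup.map_top_of_surjective π hπs)
    (by
      intro z hz
      obtain ⟨g, rfl⟩ := hπs z
      rw [hπ1]
      apply hcenX
      intro y hy
      have h1 := hz (π y) (Finset.mem_image_of_mem π hy)
      have h2 := hinj _ (hconj g y hy) y hy (by
        rw [map_mul, map_mul, map_inv, h1]; group)
      calc g * y = (g * y * g⁻¹) * g := by group
        _ = y * g := by rw [h2])
  have hex : ∀ i, ∃ y ∈ X, π y = φ i := by
    intro i
    have : φ i ∈ Set.range φ := ⟨i, rfl⟩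
    rw [hφr] at this
    simpa using this
  choose ψ hψX hψ using hex
  refine ⟨α, h0, h1, ψ, ?_, ?_, ?_⟩
  · intro i j h
    apply hφi
    rw [← hψ, ← hψ, h]
  · ext y
    constructor
    · rintro ⟨i, rfl⟩; exact hψX i
    · intro hy
      have : π y ∈ Set.range φ := by
        rw [hφr]; exact Finset.mem_coe.2 (Finset.mem_image_of_mem π hy)
      obtain ⟨i, hi⟩ := this
      exact ⟨i, hinj _ (hψX i) _ hy (by rw [hψ, hi])⟩
  · intro i j
    apply hinj _ (hconj _ _ (hψX j)) _ (hψX _)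
    rw [map_mul, map_mul, map_inv, hψ, hψ, hψ, hφ]

lemma aux_D2 {G : Type*} [Group G] (p : ℕ) (hp : p.Prime) (x : G)
    (X : Finset G) (hX : ∀ y, y ∈ X ↔ IsConj x y) (hXc : X.card = p)
    (hgen : Subgroup.closure (X : Set G) = ⊤) :
    ∃ α : ZMod p, α ≠ 0 ∧ α ≠ 1 ∧ ∃ φ : ZMod p → G, Function.Injective φ ∧
      Set.range φ = X ∧ ∀ i j, φ i * φ j * (φ i)⁻¹ = φ ((1 - α) * i + α * j) :=
  aux_D2' (QuotientGroup.mk' (Subgroup.center G)) (QuotientGroup.mk'_surjective _)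
    (fun g => QuotientGroup.eq_one_iff g) p hp x X hX hXc hgen

lemma aux_D3 {G : Type*} [Group G] (p : ℕ) (hp : p.Prime) (α : ZMod p) (h0 : α ≠ 0) (h1 : α ≠ 1)
    (φ : ZMod p → G) (hi : Function.Injective φ)
    (hgen : Subgroup.closure (Set.range φ) = ⊤)
    (hφ : ∀ i j, φ i * φ j * (φ i)⁻¹ = φ ((1 - α) * i + α * j)) :
    ∃ D : ZMod p → G, (∀ a b, D (a + b) = D a * D b) ∧
      (∀ a i, D a * φ i * (D a)⁻¹ = φ (i + a)) ∧
      (∀ a, φ 0 * D a * (φ 0)⁻¹ = D (α * a)) := by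
  haveI := Fact.mk hp
  have hc : (1 - α) ≠ 0 := sub_ne_zero.2 h1.symm
  let t : ZMod p → ZMod p → G := fun i j => φ i * (φ j)⁻¹
  have hinv : ∀ j l, (φ j)⁻¹ * φ l * φ j = φ (α⁻¹ * (l - (1 - α) * j)) := by
    intro j l
    have := hφ j (α⁻¹ * (l - (1 - α) * j))
    rw [mul_inv_cancel_left₀ h0] at this
    have h2 : (1 - α) * j + (l - (1 - α) * j) = l := by ring
    rw [h2] at this
    rw [← this]; group
  have ht : ∀ i j l, t i j * φ l * (t i j)⁻¹ = φ (l + (1 - α) * (i - j)) := by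
    intro i j l
    have : t i j * φ l * (t i j)⁻¹ = φ i * ((φ j)⁻¹ * φ l * φ j) * (φ i)⁻¹ := by
      simp only [t]; group
    rw [this, hinv, hφ, mul_inv_cancel_left₀ h0]
    congr 1; ring
  have hpow : ∀ (n : ℕ) l, (t 1 0)^n * φ l * ((t 1 0)^n)⁻¹ = φ (l + (1 - α) * n) := by
    intro n
    induction n with
    | zero => intro l; simp
    | succ n ih =>
      intro l
      have : (t 1 0)^(n+1) * φ l * ((t 1 0)^(n+1))⁻¹
        = (t 1 0)^n * (t 1 0 * φ l * (t 1 0)⁻¹) * ((t 1 0)^n)⁻¹ := by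
        rw [pow_succ]; group
      rw [this, ht, ih]
      congr 1; push_cast; ring
  have hcomm : ∀ i j, t 1 0 * t i j = t i j * t 1 0 := by
    intro i j
    set n := (i - j).val with hn
    have hnn : ((n : ℕ) : ZMod p) = i - j := by rw [hn, ZMod.natCast_zmod_val]
    have hz := aux_cen (Set.range φ) hgen (((t 1 0)^n)⁻¹ * t i j) (by
      rintro _ ⟨l, rfl⟩
      have e1 := ht i j l
      rw [← hnn, ← hpow] at e1
      have : t i j * φ l = (t i j * φ l * (t i j)⁻¹) * t i j := by group
      rw [mul_assoc, this, e1]; group) (t 1 0)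
    have e : t i j = (t 1 0)^n * (((t 1 0)^n)⁻¹ * t i j) := by group
    generalize ((t 1 0)^n)⁻¹ * t i j = z at hz e
    rw [e, ← mul_assoc, ← pow_succ', mul_assoc, ← hz, ← mul_assoc, ← pow_succ]
  have hshift1 : ∀ i j, t (i + (1 - α)) (j + (1 - α)) = t i j := by
    intro i j
    have a1 := ht 1 0 i
    have a2 := ht 1 0 j
    simp only [sub_zero, mul_one] at a1 a2
    have : t (i + (1 - α)) (j + (1 - α)) = t 1 0 * t i j * (t 1 0)⁻¹ := by
      change φ _ * (φ _)⁻¹ = _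
      rw [← a1, ← a2]
      change _ = t 1 0 * (φ i * (φ j)⁻¹) * (t 1 0)⁻¹
      group
    rw [this, hcomm]; group
  have hshiftn : ∀ (n : ℕ) i j, t (i + n * (1 - α)) (j + n * (1 - α)) = t i j := by
    intro n
    induction n with
    | zero => intro i j; simp
    | succ n ih =>
      intro i j
      rw [← ih i j, ← hshift1 (i + n * (1 - α))]
      congr 1 <;> push_cast <;> ring
  have hshift : ∀ m i j, t (i + m) (j + m) = t i j := by
    intro m i j
    have := hshiftn (m * (1 - α)⁻¹).val i j
    rw [ZMod.natCast_zmod_val, inv_mul_cancel_right₀ hc] at this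
    exact this
  have hadd : ∀ a b, t (a + b) 0 = t a 0 * t b 0 := by
    intro a b
    have := hshift b a 0
    rw [← this]
    simp only [t, zero_add]; group
  refine ⟨fun a => t (a * (1 - α)⁻¹) 0, ?_, ?_, ?_⟩
  · intro a b
    simp only [add_mul]; exact hadd _ _
  · intro a i
    simp only
    rw [ht]
    congr 1
    field_simp
    ring
  · intro a
    simp only
    have e1 := hφ 0 (a * (1 - α)⁻¹)
    have e2 := hφ 0 0
    simp only [mul_zero, zero_add] at e1 e2
    have : φ 0 * t (a * (1 - α)⁻¹) 0 * (φ 0)⁻¹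
      = (φ 0 * φ (a * (1 - α)⁻¹) * (φ 0)⁻¹) * (φ 0 * φ 0 * (φ 0)⁻¹)⁻¹ := by
      simp only [t]; group
    rw [this, e1, e2, mul_assoc]
end AuxPE

/-- Let `k` be a field, `G` a group, `p` a prime, and `V` a Yetter–Drinfeld module
over `kG` (a `G`-representation with a `G`-grading `V = ⊕_{x∈G} V_x` satisfying
`g · V_x = V_{gxg⁻¹}`) with `dim_k V = p`. Let `X = {x | V_x ≠ 0}` be the support, assumed to be
a conjugacy class generating `G`, and assume `V` is absolutely irreducible: each `V_x` (`x ∈ X`)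
is a nonzero irreducible `C_G(x)`-module all of whose `C_G(x)`-equivariant endomorphisms are
scalars. Then: (i) `X ≅ Aff(p, α)` for some `α ∈ ℤ/pℤ \ {0,1}`; (ii) `dim_k V_x = 1` for all
`x ∈ X`; (iii) there are `λ ∈ k^×` and nonzero vectors `v_x ∈ V_x` with
`x · v_y = λ v_{x y x⁻¹}` for all `x, y ∈ X`. -/
theorem stmt9 {k : Type*} [Field k] {G : Type*} [Group G] [DecidableEq G]
    {V : Type*} [AddCommGroup V] [Module k V]
    (ρ : Representation k G V)
    (Vx : G → Submodule k V)
    (hgrad : DirectSum.IsInternal Vx)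
    (hcompat : ∀ g x : G, ∀ v ∈ Vx x, ρ g v ∈ Vx (g * x * g⁻¹))
    (p : ℕ) (hp : p.Prime)
    (hdim : Module.finrank k V = p)
    (hXconj : ∃ x₀ : G, {x : G | Vx x ≠ ⊥} = {y | IsConj x₀ y})
    (hXgen : Subgroup.closure {x : G | Vx x ≠ ⊥} = ⊤)
    (hirr : ∀ x : G, Vx x ≠ ⊥ →
      ∀ U : Submodule k V, U ≤ Vx x →
        (∀ g ∈ Subgroup.centralizer ({x} : Set G), ∀ v ∈ U, ρ g v ∈ U) →
        U = ⊥ ∨ U = Vx x)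
    (habs : ∀ x : G, Vx x ≠ ⊥ →
      ∀ f : V →ₗ[k] V, (∀ v ∈ Vx x, f v ∈ Vx x) →
        (∀ g ∈ Subgroup.centralizer ({x} : Set G), ∀ v ∈ Vx x, f (ρ g v) = ρ g (f v)) →
        ∃ c : k, ∀ v ∈ Vx x, f v = c • v) :
    (∃ α : ZMod p, α ≠ 0 ∧ α ≠ 1 ∧
      ∃ φ : ZMod p → G, Function.Injective φ ∧ Set.range φ = {x : G | Vx x ≠ ⊥} ∧
        ∀ i j : ZMod p, φ i * φ j * (φ i)⁻¹ = φ ((1 - α) * i + α * j)) ∧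
    (∀ x : G, Vx x ≠ ⊥ → Module.finrank k (Vx x) = 1) ∧
    (∃ lam : k, lam ≠ 0 ∧ ∃ v : G → V,
      (∀ x : G, Vx x ≠ ⊥ → v x ∈ Vx x ∧ v x ≠ 0) ∧
      (∀ x y : G, Vx x ≠ ⊥ → Vx y ≠ ⊥ → ρ x (v y) = lam • v (x * y * x⁻¹))) := by
  classical
  haveI hfd : FiniteDimensional k V := by
    apply FiniteDimensional.of_finrank_pos
    rw [hdim]; exact hp.pos
  obtain ⟨x₀, hx₀⟩ := hXconj
  have hXiff : ∀ y, Vx y ≠ ⊥ ↔ IsConj x₀ y := fun y => Set.ext_iff.1 hx₀ y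
  have hfin : {x : G | Vx x ≠ ⊥}.Finite :=
    WellFoundedGT.finite_ne_bot_of_iSupIndep hgrad.submodule_iSupIndep
  haveI : Fintype {x : G // Vx x ≠ ⊥} := hfin.fintype
  have hρinv : ∀ g v, ρ g⁻¹ (ρ g v) = v := by
    intro g v
    rw [← Module.End.mul_apply, ← map_mul]; simp
  have hρinj : ∀ g, Function.Injective (ρ g) := fun g a b h => by
    rw [← hρinv g a, h, hρinv]
  have hle : ∀ g x, Module.finrank k (Vx x) ≤ Module.finrank k (Vx (g * x * g⁻¹)) := by
    intro g x
    refine LinearMap.finrank_le_finrank_of_injective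
      (f := (ρ g).restrict (p := Vx x) (q := Vx (g * x * g⁻¹)) (hcompat g x)) ?_
    intro a b h
    apply Subtype.ext
    apply hρinj g
    exact congrArg Subtype.val h
  have heq : ∀ x, Vx x ≠ ⊥ → Module.finrank k (Vx x) = Module.finrank k (Vx x₀) := by
    intro x hx
    obtain ⟨g, rfl⟩ := isConj_iff.1 ((hXiff x).1 hx)
    apply le_antisymm _ (hle g x₀)
    have := hle g⁻¹ (g * x₀ * g⁻¹)
    have e : g⁻¹ * (g * x₀ * g⁻¹) * g⁻¹⁻¹ = x₀ := by group
    rwa [e] at this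
  have hx₀n : Vx x₀ ≠ ⊥ := (hXiff x₀).2 (IsConj.refl _)
  have hsum : p = Fintype.card {x : G // Vx x ≠ ⊥} * Module.finrank k (Vx x₀) := by
    have hint := DirectSum.isInternal_ne_bot_iff.2 hgrad
    have e := (LinearEquiv.ofBijective (DirectSum.coeLinearMap (fun i : {x : G // Vx x ≠ ⊥} => Vx i.1)) hint).finrank_eq
    rw [hdim] at e
    rw [← e, Module.finrank_directSum, Finset.sum_congr rfl (fun i _ => heq i.1 i.2),
      Finset.sum_const, smul_eq_mul, Finset.card_univ]
  have hself : ∀ x, Vx x ≠ ⊥ → ∃ c : k, ∀ v ∈ Vx x, ρ x v = c • v := by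
    intro x hx
    apply habs x hx (ρ x)
    · intro v hv
      have := hcompat x x v hv
      have e : x * x * x⁻¹ = x := by group
      rwa [e] at this
    · intro g hg v hv
      rw [Subgroup.mem_centralizer_singleton_iff] at hg
      rw [← Module.End.mul_apply, ← Module.End.mul_apply, ← map_mul, ← map_mul, hg]
  obtain ⟨c, hc⟩ := hself x₀ hx₀n
  obtain ⟨w, hw, hw0⟩ := (Submodule.ne_bot_iff _).1 hx₀n
  have hn1 : Module.finrank k (Vx x₀) = 1 := by
    rcases (Nat.dvd_prime hp).1 (Dvd.intro_left _ hsum.symm) with h | h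
    · exact h
    · exfalso
      rw [h] at hsum
      have hc1 : Fintype.card {x : G // Vx x ≠ ⊥} = 1 := by
        have := hp.pos
        nlinarith
      have hsub := Fintype.card_le_one_iff.1 hc1.le
      have hXs : {x : G | Vx x ≠ ⊥} = {x₀} := by
        ext y
        rw [Set.mem_singleton_iff]
        constructor
        · intro hy
          exact congrArg Subtype.val (hsub ⟨y, hy⟩ ⟨x₀, hx₀n⟩)
        · rintro rfl; exact hx₀n
      rw [hXs] at hXgen
      have hcx : c ≠ 0 := by
        rintro rfl
        have h1 := hc w hw
        rw [zero_smul] at h1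
        exact hw0 (hρinj x₀ (by rw [h1, map_zero]))
      have hinvt : ∀ g : G, ∀ v ∈ Submodule.span k {w}, ρ g v ∈ Submodule.span k {w} := by
        have hg : ∀ g : G, ∃ b : k, ρ g w = b • w := by
          intro g
          have hg : g ∈ Subgroup.closure {x₀} := by rw [hXgen]; exact Subgroup.mem_top g
          refine Subgroup.closure_induction (p := fun g _ => ∃ b : k, ρ g w = b • w)
            ?_ ?_ ?_ ?_ hg
          · intro y hy
            rw [Set.mem_singleton_iff] at hy
            subst hy
            exact ⟨c, hc w hw⟩
          · exact ⟨1, by simp⟩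
          · rintro a b _ _ ⟨s, hs⟩ ⟨t, ht⟩
            exact ⟨t * s, by rw [map_mul, Module.End.mul_apply, ht, map_smul, hs, smul_smul]⟩
          · rintro a _ ⟨s, hs⟩
            refine ⟨s⁻¹, ?_⟩
            have hs0 : s ≠ 0 := by
              rintro rfl
              rw [zero_smul] at hs
              exact hw0 (hρinj a (by rw [hs, map_zero]))
            have h1 := hρinv a w
            rw [hs, map_smul] at h1
            calc ρ a⁻¹ w = s⁻¹ • (s • ρ a⁻¹ w) := by rw [smul_smul, inv_mul_cancel₀ hs0, one_smul]
              _ = s⁻¹ • w := by rw [h1]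
        intro g v hv
        obtain ⟨r, rfl⟩ := Submodule.mem_span_singleton.1 hv
        obtain ⟨b, hb⟩ := hg g
        rw [map_smul, hb]
        exact Submodule.smul_mem _ _ (Submodule.smul_mem _ _ (Submodule.mem_span_singleton_self w))
      rcases hirr x₀ hx₀n (Submodule.span k {w})
        ((Submodule.span_singleton_le_iff_mem _ _).2 hw) (fun g _ v hv => hinvt g v hv) with h1 | h1
      · exact hw0 (Submodule.span_singleton_eq_bot.1 h1)
      · rw [← h1, finrank_span_singleton hw0] at h
        exact hp.one_lt.ne h
  rw [hn1, mul_one] at hsum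
  obtain ⟨α, h0, h1, φ, hφi, hφr, hφ⟩ := aux_D2 p hp x₀ hfin.toFinset
    (by intro y; rw [Set.Finite.mem_toFinset]; exact hXiff y)
    (by
      rw [hsum, ← Set.ncard_eq_toFinset_card _ hfin, ← Nat.card_coe_set_eq,
        ← Nat.card_eq_fintype_card]
      rfl)
    (by rw [Set.Finite.coe_toFinset]; exact hXgen)
  rw [Set.Finite.coe_toFinset] at hφr
  refine ⟨⟨α, h0, h1, φ, hφi, hφr, hφ⟩, fun x hx => (heq x hx).trans hn1, ?_⟩
  obtain ⟨D, hDadd, hDφ, hDα⟩ := aux_D3 p hp α h0 h1 φ hφi (by rw [hφr]; exact hXgen) hφ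
  have hφn : ∀ i, Vx (φ i) ≠ ⊥ := by
    intro i
    have : φ i ∈ Set.range φ := ⟨i, rfl⟩
    rw [hφr] at this
    exact this
  have hsur : ∀ x, Vx x ≠ ⊥ → ∃ i, φ i = x := by
    intro x hx
    have : x ∈ Set.range φ := by rw [hφr]; exact hx
    exact this
  obtain ⟨lam, hlam⟩ := hself (φ 0) (hφn 0)
  obtain ⟨u, hu, hu0⟩ := (Submodule.ne_bot_iff _).1 (hφn 0)
  have hlam0 : lam ≠ 0 := by
    rintro rfl
    have h1 := hlam u hu
    rw [zero_smul] at h1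
    exact hu0 (hρinj (φ 0) (by rw [h1, map_zero]))
  have hD0 : D 0 = 1 := by
    have := hDadd 0 0
    rw [add_zero] at this
    exact (left_eq_mul.1 this)
  refine ⟨lam, hlam0, fun x => ρ (D (Function.invFun φ x)) u, ?_, ?_⟩
  · intro x hx
    obtain ⟨i, rfl⟩ := hsur x hx
    simp only [Function.leftInverse_invFun hφi i]
    refine ⟨?_, ?_⟩
    · have := hcompat (D i) (φ 0) u hu
      rwa [hDφ, zero_add] at this
    · intro h
      exact hu0 (hρinj (D i) (by rw [h, map_zero]))
  · intro x y hx hy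
    obtain ⟨i, rfl⟩ := hsur x hx
    obtain ⟨j, rfl⟩ := hsur y hy
    rw [hφ]
    simp only [Function.leftInverse_invFun hφi _]
    rw [← map_smul, ← hlam u hu]
    simp only [← Module.End.mul_apply, ← map_mul]
    congr 2
    have e1 : φ i = D i * φ 0 * (D i)⁻¹ := by rw [hDφ, zero_add]
    have e2 : (D i)⁻¹ = D (-i) := by
      rw [inv_eq_iff_mul_eq_one, ← hDadd, add_neg_cancel, hD0]
    have e3 : (1 - α) * i + α * j = i + α * (-i + j) := by ring
    rw [e1, e2, e3, hDadd, ← hDα, hDadd]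
    group
end
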